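/- arXiv:1101.1372 — 8 statements merged into one kernel-verified Lean document; each statement's English description precedes it below -/
import Mathlib

section
/- The projective symplectic group PSp(4, F_3), i.e., the quotient of the symplectic group Sp(4, F_3) over the field with three elements by its center, contains a subgroup isomorphic to (Z/2Z)^4. -/
/-! The groups `SL₂(R)` and `O_l(R)` act on the two factors of `R² ⊗ Rˡ`; the tensor product of the
area form with the standard quadratic form is symplectic, so both groups map to `Sp(R² ⊗ Rˡ)`, with
commuting images. If `a² + b² = -1` in `R`, then `SL₂(R)` contains the quaternion units `i` and
`j`, which anticommute and have square `-1`; the reflections `diag(1, -1)` and `[0 1; 1 0]` in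
`O₂(R)` anticommute and have square `1`. Since `-1` is central, these four elements become commuting
involutions in `PSp₄(R)`. They are independent, because each of them commutes with three of the four
and anticommutes with the last, so that centralizers tell them apart. Over `F₃` take `a = b = 1`. -/

open Matrix
open scoped commutatorElement

section ElementaryAbelian

open Subgroup

variable {G ι : Type*} [Group G] [Finite ι] {p : ℕ} [Fact p.Prime]

theorem disjoint_zpowers_of_notMem {u : G} {C : Subgroup G} (hu : u ^ p = 1) (huC : u ∉ C) :
    Disjoint (zpowers u) C := by
  have hord : orderOf u = p := orderOf_eq_prime hu (ne_of_mem_of_not_mem C.one_mem huC).symm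
  rw [disjoint_def]
  rintro _ ⟨k, rfl⟩ hk
  by_contra hne
  have hpk : ¬ (p : ℤ) ∣ k := by rwa [← hord, orderOf_dvd_iff_zpow_eq_one]
  have hgcd : k.gcd (orderOf u) = 1 := by
    rw [hord, Int.gcd_comm, ← Int.isCoprime_iff_gcd_eq_one]
    exact (Nat.prime_iff_prime_int.mp Fact.out).coprime_iff_not_dvd.mpr hpk
  exact huC (zpowers_le.mpr hk (mem_zpowers_zpow_iff.mpr hgcd))

theorem exists_subgroup_mulEquiv_pi_zmod {u : ι → G} {C : ι → Subgroup G}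
    (hu : ∀ i, u i ^ p = 1) (hcomm : ∀ i j, Commute (u i) (u j))
    (hC : ∀ i j, u i ∈ C j ↔ i ≠ j) :
    ∃ H : Subgroup G, Nonempty (H ≃* Multiplicative (ι → ZMod p)) := by
  cases nonempty_fintype ι
  have hcomm' : Pairwise fun i j => ∀ x y : G,
      x ∈ zpowers (u i) → y ∈ zpowers (u j) → Commute x y := by
    rintro i j - _ _ ⟨m, rfl⟩ ⟨n, rfl⟩
    exact (hcomm i j).zpow_zpow m n
  have hnotMem (i : ι) : u i ∉ C i := by simp [hC]
  have hindep : iSupIndep fun i => zpowers (u i) := fun i =>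
    (disjoint_zpowers_of_notMem (hu i) (hnotMem i)).mono_right
      (iSup₂_le fun j hji => zpowers_le.mpr ((hC j i).mpr hji))
  have hcard (i : ι) : Nat.card (zpowers (u i)) = p := by
    rw [Nat.card_zpowers]
    exact orderOf_eq_prime (hu i) (ne_of_mem_of_not_mem (C i).one_mem (hnotMem i)).symm
  have hgen (i : ι) (x : zpowers (u i)) : x ∈ zpowers ⟨u i, mem_zpowers (u i)⟩ := by
    obtain ⟨_, k, rfl⟩ := x
    exact ⟨k, rfl⟩
  exact ⟨(Subgroup.noncommPiCoprod hcomm').range,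
    ⟨(MonoidHom.ofInjective (injective_noncommPiCoprod_of_iSupIndep hindep)).symm.trans <|
      (MulEquiv.piCongrRight fun i => (zmodMulEquivOfGenerator (hgen i) (hcard i)).symm).trans
        (MulEquiv.funMultiplicative ι (ZMod p)).symm⟩⟩

theorem exists_subgroup_quotient_center_mulEquiv_pi_zmod {g h : ι → G}
    (hg : ∀ i, g i ^ p ∈ center G) (hcomm : ∀ i j, ⁅g i, g j⁆ ∈ center G)
    (hgh : ∀ i j, Commute (g i) (h j) ↔ i ≠ j) :
    ∃ H : Subgroup (G ⧸ center G), Nonempty (H ≃* Multiplicative (ι → ZMod p)) := by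
  let π := QuotientGroup.mk' (center G)
  have hker (z : G) : π z = 1 ↔ z ∈ center G := QuotientGroup.eq_one_iff z
  have hcentralizer (x y : G) : π x ∈ (centralizer {y}).map π ↔ Commute x y := by
    rw [← mem_comap, QuotientGroup.comap_map_mk', sup_eq_right.mpr (center_le_centralizer _),
      mem_centralizer_singleton_iff, commute_iff_eq]
  refine exists_subgroup_mulEquiv_pi_zmod (u := fun i => π (g i))
    (C := fun i => (centralizer {h i}).map π) (fun i => ?_) (fun i j => ?_) (fun i j => ?_)
  · rw [← map_pow, hker]
    exact hg i
  · rw [← commutatorElement_eq_one_iff_commute, ← map_commutatorElement, hker]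
    exact hcomm i j
  · rw [hcentralizer, hgh]

end ElementaryAbelian

section DistribNeg

open Subgroup

variable {G ι : Type*} [Group G] [HasDistribNeg G]

theorem neg_one_mem_center : (-1 : G) ∈ center G :=
  mem_center_iff.mpr fun g => (Commute.neg_one_right g).eq

theorem commutatorElement_eq_neg_one {x y : G} (h : x * y = -(y * x)) : ⁅x, y⁆ = -1 := by
  simp [commutatorElement_def, h]

theorem exists_subgroup_quotient_center_mulEquiv_of_anticommute [Finite ι] (hneg : (-1 : G) ≠ 1)
    {x y : ι → G} (hx : ∀ i, x i ^ 2 = 1 ∨ x i ^ 2 = -1) (hy : ∀ i, y i ^ 2 = 1 ∨ y i ^ 2 = -1)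
    (hxy : ∀ i, x i * y i = -(y i * x i))
    (hcomm : ∀ i j, i ≠ j → Commute (x i) (x j) ∧ Commute (x i) (y j) ∧ Commute (y i) (y j)) :
    ∃ H : Subgroup (G ⧸ center G), Nonempty (H ≃* Multiplicative (ι ⊕ ι → ZMod 2)) := by
  have hnot (i : ι) : ¬ Commute (x i) (y i) := by
    rwa [← commutatorElement_eq_one_iff_commute, commutatorElement_eq_neg_one (hxy i)]
  have hxx (i j : ι) : Commute (x i) (x j) := by
    obtain rfl | hij := eq_or_ne i j
    exacts [.refl _, (hcomm i j hij).1]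
  have hyy (i j : ι) : Commute (y i) (y j) := by
    obtain rfl | hij := eq_or_ne i j
    exacts [.refl _, (hcomm i j hij).2.2]
  have hxy_iff (i j : ι) : Commute (x i) (y j) ↔ i ≠ j :=
    ⟨by rintro h rfl; exact hnot i h, fun hij => (hcomm i j hij).2.1⟩
  have hyx_iff (i j : ι) : Commute (y i) (x j) ↔ i ≠ j := by
    rw [Commute.symm_iff, hxy_iff, ne_comm]
  have hcenter {z : G} (hz : z = 1 ∨ z = -1) : z ∈ center G := by
    obtain rfl | rfl := hz
    exacts [one_mem _, neg_one_mem_center]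
  have hcomm_center {a b : G} (h : Commute a b) : ⁅a, b⁆ ∈ center G :=
    hcenter (.inl (commutatorElement_eq_one_iff_commute.mpr h))
  have hxy_center (i j : ι) : ⁅x i, y j⁆ ∈ center G := by
    obtain rfl | hij := eq_or_ne i j
    exacts [hcenter (.inr (commutatorElement_eq_neg_one (hxy i))),
      hcomm_center ((hxy_iff i j).mpr hij)]
  refine exists_subgroup_quotient_center_mulEquiv_pi_zmod
    (g := Sum.elim x y) (h := Sum.elim y x) ?_ ?_ ?_
  · rintro (i | i)
    exacts [hcenter (hx i), hcenter (hy i)]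
  · rintro (i | i) (j | j)
    exacts [hcomm_center (hxx i j), hxy_center i j,
      commutatorElement_inv (x j) (y i) ▸ inv_mem (hxy_center j i), hcomm_center (hyy i j)]
  · rintro (i | i) (j | j)
    all_goals simp [hxx, hyy, hxy_iff, hyx_iff]

end DistribNeg

section SymplecticGroup

variable {l R : Type*} [DecidableEq l] [Fintype l] [CommRing R]

instance instNegSymplecticGroup : Neg (symplecticGroup l R) :=
  ⟨fun A => ⟨-A, SymplecticGroup.neg_mem A.2⟩⟩

@[simp]
theorem coe_neg_symplecticGroup (A : symplecticGroup l R) :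
    ((-A : symplecticGroup l R) : Matrix (l ⊕ l) (l ⊕ l) R) = -A :=
  rfl

instance instHasDistribNegSymplecticGroup : HasDistribNeg (symplecticGroup l R) :=
  Subtype.coe_injective.hasDistribNeg _ coe_neg_symplecticGroup (symplecticGroup l R).coe_mul

theorem neg_one_ne_one_symplecticGroup [Nonempty l] (h2 : (2 : R) ≠ 0) :
    (-1 : symplecticGroup l R) ≠ 1 := by
  intro h
  obtain ⟨k⟩ := ‹Nonempty l›
  have hentry : (-1 : R) = 1 := by
    simpa using congr_fun₂ (congr_arg Subtype.val h) (Sum.inl k) (Sum.inl k)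
  exact h2 (by linear_combination -hentry)

theorem fromBlocks_smul_one_mem_symplecticGroup {a b c d : R} (hdet : a * d - b * c = 1) :
    fromBlocks (a • 1) (b • 1) (c • 1) (d • 1) ∈ symplecticGroup l R := by
  rw [SymplecticGroup.mem_iff, J]
  simp only [fromBlocks_multiply, fromBlocks_transpose, transpose_smul, transpose_one,
    smul_mul_smul_comm, fromBlocks_inj, Matrix.mul_zero, Matrix.mul_one, Matrix.mul_neg, zero_add,
    add_zero, Matrix.neg_mul]
  refine ⟨by module, ?_, ?_, by module⟩
  · linear_combination (norm := module) -hdet • (1 : Matrix l l R)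
  · linear_combination (norm := module) hdet • (1 : Matrix l l R)

/-- The action of `SL₂(R)` on the first factor of `R² ⊗ Rˡ = Rˡ ⊕ Rˡ`. -/
def symplecticOfSL₂ : SpecialLinearGroup (Fin 2) R →* symplecticGroup l R where
  toFun M := ⟨fromBlocks (M 0 0 • 1) (M 0 1 • 1) (M 1 0 • 1) (M 1 1 • 1),
    fromBlocks_smul_one_mem_symplecticGroup (by rw [← det_fin_two, M.det_coe])⟩
  map_one' := Subtype.ext <| by simp
  map_mul' M N := Subtype.ext <| by
    simp [fromBlocks_multiply, mul_apply, Fin.sum_univ_two, add_smul, smul_smul, mul_comm]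

/-- The action of `O_l(R)` on the second factor of `R² ⊗ Rˡ = Rˡ ⊕ Rˡ`. -/
def symplecticOfOrthogonal : orthogonalGroup l R →* symplecticGroup l R where
  toFun A := ⟨fromBlocks A 0 0 A, by
    rw [SymplecticGroup.mem_iff]
    simp [J, fromBlocks_transpose, fromBlocks_multiply, (mem_orthogonalGroup_iff l R).mp A.2]⟩
  map_one' := Subtype.ext <| by simp
  map_mul' A B := Subtype.ext <| by simp [fromBlocks_multiply]

theorem symplecticOfSL₂_neg (M : SpecialLinearGroup (Fin 2) R) :
    symplecticOfSL₂ (l := l) (-M) = -symplecticOfSL₂ M :=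
  Subtype.ext <| by simp [symplecticOfSL₂, fromBlocks_neg]

theorem symplecticOfOrthogonal_neg (A : orthogonalGroup l R) :
    symplecticOfOrthogonal (-A) = -symplecticOfOrthogonal A :=
  Subtype.ext <| by
    change fromBlocks (-A.1) 0 0 (-A.1) = -fromBlocks A.1 0 0 A.1
    rw [fromBlocks_neg, neg_zero]

theorem commute_symplecticOfSL₂_symplecticOfOrthogonal (M : SpecialLinearGroup (Fin 2) R)
    (A : orthogonalGroup l R) : Commute (symplecticOfSL₂ M) (symplecticOfOrthogonal A) :=
  Subtype.ext <| by simp [symplecticOfSL₂, symplecticOfOrthogonal, fromBlocks_multiply]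

end SymplecticGroup

section TwoByTwo

theorem mem_orthogonalGroup_of_isSymm {n R : Type*} [DecidableEq n] [Fintype n] [CommRing R]
    {A : Matrix n n R} (hsymm : A.IsSymm) (hsq : A ^ 2 = 1) : A ∈ orthogonalGroup n R := by
  rw [mem_orthogonalGroup_iff, hsymm.eq, ← sq, hsq]

variable {R : Type*} [CommRing R]

theorem exists_anticommuting_quaternion_units {a b : R} (hab : a ^ 2 + b ^ 2 = -1) :
    ∃ i j : SpecialLinearGroup (Fin 2) R, i ^ 2 = -1 ∧ j ^ 2 = -1 ∧ i * j = -(j * i) := by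
  have hi : !![0, -1; 1, 0] ^ 2 = (-1 : Matrix (Fin 2) (Fin 2) R) := by
    simp [sq, one_fin_two]
  have hj : !![a, b; b, -a] ^ 2 = (-1 : Matrix (Fin 2) (Fin 2) R) := by
    simp [sq, one_fin_two, mul_comm, add_comm, ← hab]
  have hij : !![0, -1; 1, 0] * !![a, b; b, -a] = -(!![a, b; b, -a] * !![0, -1; 1, 0]) := by
    simp
  have hdet_i : det !![0, -1; 1, (0 : R)] = 1 := by simp [det_fin_two]
  have hdet_j : det !![a, b; b, -a] = 1 := by rw [det_fin_two_of]; linear_combination -hab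
  exact ⟨⟨_, hdet_i⟩, ⟨_, hdet_j⟩, Subtype.ext hi, Subtype.ext hj, Subtype.ext hij⟩

variable (R) in
theorem exists_anticommuting_reflections :
    ∃ s t : orthogonalGroup (Fin 2) R, s ^ 2 = 1 ∧ t ^ 2 = 1 ∧ s * t = -(t * s) := by
  have hs : !![1, 0; 0, -1] ^ 2 = (1 : Matrix (Fin 2) (Fin 2) R) := by simp [sq, one_fin_two]
  have ht : !![0, 1; 1, 0] ^ 2 = (1 : Matrix (Fin 2) (Fin 2) R) := by simp [sq, one_fin_two]
  have hst : !![1, 0; 0, -1] * !![0, 1; 1, 0] = -(!![0, 1; 1, 0] * !![1, 0; 0, (-1 : R)]) := by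
    simp
  have hs_mem : !![1, 0; 0, -1] ∈ orthogonalGroup (Fin 2) R := by
    refine mem_orthogonalGroup_of_isSymm (IsSymm.ext fun i j => ?_) hs
    fin_cases i <;> fin_cases j <;> rfl
  have ht_mem : !![0, 1; 1, 0] ∈ orthogonalGroup (Fin 2) R := by
    refine mem_orthogonalGroup_of_isSymm (IsSymm.ext fun i j => ?_) ht
    fin_cases i <;> fin_cases j <;> rfl
  exact ⟨⟨_, hs_mem⟩, ⟨_, ht_mem⟩, Subtype.ext hs, Subtype.ext ht, Subtype.ext hst⟩

end TwoByTwo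

theorem psp4_f3_contains_Z2_pow4_general {R : Type*} [CommRing R] (h2 : (2 : R) ≠ 0) {a b : R}
    (hab : a ^ 2 + b ^ 2 = -1) :
    ∃ H : Subgroup (symplecticGroup (Fin 2) R ⧸ Subgroup.center (symplecticGroup (Fin 2) R)),
      Nonempty (H ≃* Multiplicative (ZMod 2 × ZMod 2 × ZMod 2 × ZMod 2)) := by
  obtain ⟨i, j, hi, hj, hij⟩ := exists_anticommuting_quaternion_units hab
  obtain ⟨s, t, hs, ht, hst⟩ := exists_anticommuting_reflections R
  obtain ⟨H, ⟨e⟩⟩ := exists_subgroup_quotient_center_mulEquiv_of_anticommute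
    (neg_one_ne_one_symplecticGroup (l := Fin 2) h2)
    (x := ![symplecticOfSL₂ i, symplecticOfOrthogonal s])
    (y := ![symplecticOfSL₂ j, symplecticOfOrthogonal t])
    (by simp [Fin.forall_fin_two, ← map_pow, hi, hs, symplecticOfSL₂_neg])
    (by simp [Fin.forall_fin_two, ← map_pow, hj, ht, symplecticOfSL₂_neg])
    (by simp [Fin.forall_fin_two, ← map_mul, hij, hst, symplecticOfSL₂_neg,
      symplecticOfOrthogonal_neg])
    (by simp [Fin.forall_fin_two, commute_symplecticOfSL₂_symplecticOfOrthogonal,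
      (commute_symplecticOfSL₂_symplecticOfOrthogonal _ _).symm])
  have hrank : Module.finrank (ZMod 2) (Fin 2 ⊕ Fin 2 → ZMod 2) =
      Module.finrank (ZMod 2) (ZMod 2 × ZMod 2 × ZMod 2 × ZMod 2) := by simp
  exact ⟨H, ⟨e.trans (LinearEquiv.ofFinrankEq _ _ hrank).toAddEquiv.toMultiplicative⟩⟩

/-- PSp(4, F_3), the quotient of Sp(4, F_3) by its center, contains a subgroup
isomorphic to (ℤ/2ℤ)⁴. -/
theorem psp4_f3_contains_Z2_pow4 :
    ∃ H : Subgroup (Matrix.symplecticGroup (Fin 2) (ZMod 3) ⧸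
        Subgroup.center (Matrix.symplecticGroup (Fin 2) (ZMod 3))),
      Nonempty (H ≃* Multiplicative (ZMod 2 × ZMod 2 × ZMod 2 × ZMod 2)) :=
  psp4_f3_contains_Z2_pow4_general (R := ZMod 3) (a := 1) (b := 1) (by decide) (by decide)
end

section
/- Every abelian subgroup of PSL(2, F_11) is either cyclic or isomorphic to the Klein four group (Z/2Z)^2. -/
/-!
The argument works over every prime field. Whether two elements of `PSL(2, F)` have commuting lifts
to `SL(2, F)` does not depend on the lifts, which leads to two cases for an abelian subgroup `H`.

If some lifts `a`, `b` do not commute, then only scalars commute with both, because the centralizer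
of a nonscalar `2 × 2` matrix is commutative. Hence `x ↦ (⁅x, a⁆, ⁅x, b⁆)` identifies `H` with the
square of the center of `SL(2, F)`, a group of order two.

If all lifts commute and some nontrivial lift `u` has eigenvalue `1`, then `u = 1 + N` with
`N * N = 0`, and over a prime field every matrix commuting with `u` is a multiple of some
`u ^ k = 1 + k * N`, so `u` generates `H`. If there is no such `u`, then the preimage of `H` is a
finite commutative group acting freely on the nonzero vectors. It is cyclic because it embeds into
a residue field of the commutative ring it generates together with inverses.
-/

section CommutatorPairing

open scoped commutatorElement

variable {G : Type*} [Group G]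

/-- The homomorphism `x ↦ ⁅x, a⁆` on a subgroup `K` whose commutators with `a` are all central.
It is one half of the commutator pairing of a group that is abelian modulo its center. -/
def commutatorCenterHom (K : Subgroup G) (a : G) (h : ∀ x ∈ K, ⁅x, a⁆ ∈ Subgroup.center G) :
    K →* Subgroup.center G where
  toFun x := ⟨⁅(x : G), a⁆, h x x.2⟩
  map_one' := by simp
  map_mul' x y := by
    ext
    simp only [Subgroup.coe_mul, commutatorElement_mul_left_eq_conj_mul]
    rw [Subgroup.mem_center_iff.mp (h y y.2) x, mul_inv_cancel_right,
      Subgroup.mem_center_iff.mp (h y y.2)]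

variable {K : Subgroup G} {a b : G} {ha : ∀ x ∈ K, ⁅x, a⁆ ∈ Subgroup.center G}
  {hb : ∀ x ∈ K, ⁅x, b⁆ ∈ Subgroup.center G}

theorem commutatorCenterHom_eq_one_iff {x : K} :
    commutatorCenterHom K a ha x = 1 ↔ Commute (x : G) a := by
  rw [Subtype.ext_iff]
  exact commutatorElement_eq_one_iff_commute

theorem ker_commutatorCenterHom_prod (hab : Subgroup.centralizer {a, b} ≤ Subgroup.center G) :
    ((commutatorCenterHom K a ha).prod (commutatorCenterHom K b hb)).ker =
      (Subgroup.center G).subgroupOf K := by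
  ext x
  rw [MonoidHom.mem_ker, MonoidHom.prod_apply, Prod.mk_eq_one, commutatorCenterHom_eq_one_iff,
    commutatorCenterHom_eq_one_iff, Subgroup.mem_subgroupOf]
  refine ⟨fun ⟨hxa, hxb⟩ ↦ hab ?_, fun hx ↦ ⟨(Subgroup.mem_center_iff.mp hx a).symm,
    (Subgroup.mem_center_iff.mp hx b).symm⟩⟩
  rintro _ (rfl | rfl)
  exacts [hxa.symm, hxb.symm]

theorem commutatorCenterHom_prod_surjective (hp : (Nat.card (Subgroup.center G)).Prime)
    (haK : a ∈ K) (hbK : b ∈ K) (hab : ¬ Commute a b) :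
    Function.Surjective ((commutatorCenterHom K a ha).prod (commutatorCenterHom K b hb)) := by
  have := Fact.mk hp
  rintro ⟨u, v⟩
  set φ := commutatorCenterHom K a ha
  set ψ := commutatorCenterHom K b hb
  have hφa : φ ⟨a, haK⟩ = 1 := commutatorCenterHom_eq_one_iff.mpr (Commute.refl a)
  have hψb : ψ ⟨b, hbK⟩ = 1 := commutatorCenterHom_eq_one_iff.mpr (Commute.refl b)
  have hφb : φ ⟨b, hbK⟩ ≠ 1 := fun h ↦ hab (commutatorCenterHom_eq_one_iff.mp h).symm
  have hψa : ψ ⟨a, haK⟩ ≠ 1 := fun h ↦ hab (commutatorCenterHom_eq_one_iff.mp h)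
  obtain ⟨i, rfl⟩ : u ∈ Subgroup.zpowers (φ ⟨b, hbK⟩) := mem_zpowers_of_prime_card rfl hφb
  obtain ⟨j, rfl⟩ : v ∈ Subgroup.zpowers (ψ ⟨a, haK⟩) := mem_zpowers_of_prime_card rfl hψa
  exact ⟨⟨b, hbK⟩ ^ i * ⟨a, haK⟩ ^ j, by simp [hφa, hψb]⟩

theorem commutatorElement_mem_center_of_mk_mem {H : Subgroup (G ⧸ Subgroup.center G)}
    [IsMulCommutative H] (ha : (a : G ⧸ Subgroup.center G) ∈ H)
    (hb : (b : G ⧸ Subgroup.center G) ∈ H) : ⁅a, b⁆ ∈ Subgroup.center G := by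
  rw [← QuotientGroup.eq_one_iff, ← QuotientGroup.mk'_apply, map_commutatorElement,
    commutatorElement_eq_one_iff_mul_comm]
  exact setLike_mul_comm ha hb

theorem nonempty_mulEquiv_center_prod_center {H : Subgroup (G ⧸ Subgroup.center G)}
    [IsMulCommutative H] (hp : (Nat.card (Subgroup.center G)).Prime)
    (ha : (a : G ⧸ Subgroup.center G) ∈ H) (hb : (b : G ⧸ Subgroup.center G) ∈ H)
    (hab : ¬ Commute a b) (hcent : Subgroup.centralizer {a, b} ≤ Subgroup.center G) :
    Nonempty (H ≃* Subgroup.center G × Subgroup.center G) := by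
  let π := QuotientGroup.mk' (Subgroup.center G)
  let φ := commutatorCenterHom (H.comap π) a
    fun _ hx ↦ commutatorElement_mem_center_of_mk_mem hx ha
  let ψ := commutatorCenterHom (H.comap π) b
    fun _ hx ↦ commutatorElement_mem_center_of_mk_mem hx hb
  have ker_eq : (π.subgroupComap H).ker = (φ.prod ψ).ker := by
    rw [ker_commutatorCenterHom_prod hcent]
    ext x
    rw [MonoidHom.mem_ker, Subgroup.mem_subgroupOf, ← QuotientGroup.eq_one_iff, Subtype.ext_iff]
    rfl
  exact ⟨(QuotientGroup.liftEquiv _ (π.subgroupComap_surjective_of_surjective H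
      (QuotientGroup.mk'_surjective _)) rfl).symm.trans
    (QuotientGroup.liftEquiv _ (commutatorCenterHom_prod_surjective hp ha hb hab) ker_eq)⟩

end CommutatorPairing

section FreeActions

variable {A : Type*} [Ring A]

theorem isUnit_mk_centralizer {S : Set A} {u : A} (hu : u ∈ Subring.centralizer S)
    (h : IsUnit u) : IsUnit (⟨u, hu⟩ : Subring.centralizer S) := by
  obtain ⟨v, rfl⟩ := h
  have hv : ((v⁻¹ : Aˣ) : A) ∈ Subring.centralizer S := fun s hs ↦
    Commute.units_inv_right (hu s hs)
  exact ⟨⟨⟨v, hu⟩, ⟨_, hv⟩, by ext; simp, by ext; simp⟩, rfl⟩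

open scoped IsMulCommutative in
theorem isCyclic_of_isUnit_map_sub_one [Nontrivial A] {G : Type*} [Group G] [Finite G]
    [IsMulCommutative G] (f : G →* A) (hf : ∀ g ≠ 1, IsUnit (f g - 1)) : IsCyclic G := by
  -- The double centralizer of a commuting set is commutative and contains the inverses of its
  -- elements, so a residue field of it still tells the elements of `G` apart.
  let R := Subring.centralizer (Set.centralizer (Set.range f))
  have hfR (g : G) : f g ∈ R := Set.subset_centralizer_centralizer ⟨g, rfl⟩
  have range_comm : ∀ x ∈ Set.range f, ∀ y ∈ Set.range f, x * y = y * x := by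
    rintro _ ⟨g, rfl⟩ _ ⟨h, rfl⟩
    rw [← map_mul, mul_comm', map_mul]
  have : IsMulCommutative R := .of_comm fun x y ↦ Subtype.ext <|
    Set.centralizer_centralizer_comm_of_comm range_comm x x.2 y y.2
  obtain ⟨m, hm⟩ := Ideal.exists_maximal R
  let χ : G →* R ⧸ m := (Ideal.Quotient.mk m : R →* R ⧸ m).comp (f.codRestrict R hfR)
  refine isCyclic_of_injective_ringHom χ ((injective_iff_map_eq_one χ).mpr fun g hg ↦ ?_)
  by_contra hne
  have sub_one_mem : f.codRestrict R hfR g - 1 ∈ m :=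
    Ideal.Quotient.eq.mp (hg.trans (map_one (Ideal.Quotient.mk m)).symm)
  exact hm.ne_top <| m.eq_top_of_isUnit_mem sub_one_mem <|
    isUnit_mk_centralizer (sub_mem (hfR g) (one_mem R)) (hf g hne)

end FreeActions

open Matrix

open scoped MatrixGroups

section TwoByTwo

variable {F : Type*} [Field F] {A B C : Matrix (Fin 2) (Fin 2) F}

theorem exists_eq_smul_one_add_smul_of_commute (hA : A ∉ Set.range (scalar (Fin 2)))
    (hAB : Commute A B) : ∃ x y : F, B = x • 1 + y • A := by
  have e (i j : Fin 2) := congrFun₂ hAB.eq i j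
  simp only [mul_apply, Fin.sum_univ_two] at e
  have e00 := e 0 0
  have e01 := e 0 1
  have e10 := e 1 0
  have of_entries (y : F) (h01 : B 0 1 = y * A 0 1) (h10 : B 1 0 = y * A 1 0)
      (h11 : B 1 1 - B 0 0 = y * (A 1 1 - A 0 0)) :
      ∃ x y : F, B = x • 1 + y • A := by
    refine ⟨B 0 0 - y * A 0 0, y, ?_⟩
    ext i j
    fin_cases i <;> fin_cases j <;> simp [h01, h10]
    linear_combination h11
  by_cases h01 : A 0 1 = 0
  · by_cases h10 : A 1 0 = 0
    · have hd : A 1 1 - A 0 0 ≠ 0 := fun h ↦ hA ⟨A 0 0, by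
        ext i j; fin_cases i <;> fin_cases j <;> simp [h01, h10, sub_eq_zero.mp h]⟩
      apply of_entries ((B 1 1 - B 0 0) / (A 1 1 - A 0 0)) <;> grind
    · apply of_entries (B 1 0 / A 1 0) <;> grind
  · apply of_entries (B 0 1 / A 0 1) <;> grind

theorem commute_of_commute_of_notMem_range_scalar (hC : C ∉ Set.range (scalar (Fin 2)))
    (hCA : Commute C A) (hCB : Commute C B) : Commute A B := by
  obtain ⟨x, y, rfl⟩ := exists_eq_smul_one_add_smul_of_commute hC hCA
  exact ((Commute.one_left B).smul_left x).add_left (hCB.smul_left y)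

theorem coe_mem_range_scalar_iff_mem_center {n R : Type*} [Fintype n] [DecidableEq n] [CommRing R]
    {a : Matrix.SpecialLinearGroup n R} :
    (a : Matrix n n R) ∈ Set.range (scalar n) ↔
      a ∈ Subgroup.center (Matrix.SpecialLinearGroup n R) := by
  rw [Matrix.SpecialLinearGroup.mem_center_iff]
  refine ⟨fun ⟨r, hr⟩ ↦ ⟨r, ?_, hr⟩, fun ⟨r, _, hr⟩ ↦ ⟨r, hr⟩⟩
  simpa [← hr] using a.det_coe

theorem centralizer_pair_le_center_of_not_commute {a b : SL(2, F)} (hab : ¬ Commute a b) :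
    Subgroup.centralizer {a, b} ≤ Subgroup.center SL(2, F) := by
  intro c hc
  rw [← coe_mem_range_scalar_iff_mem_center]
  by_contra hcs
  have hca : Commute (c : Matrix (Fin 2) (Fin 2) F) a := congrArg Subtype.val (hc a (by simp)).symm
  have hcb : Commute (c : Matrix (Fin 2) (Fin 2) F) b := congrArg Subtype.val (hc b (by simp)).symm
  exact hab (Subtype.ext (commute_of_commute_of_notMem_range_scalar hcs hca hcb))

theorem card_center_eq_two_of_ne_bot {R : Type*} [CommRing R] [IsDomain R]
    (h : Subgroup.center SL(2, R) ≠ ⊥) : Nat.card (Subgroup.center SL(2, R)) = 2 := by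
  let e : Subgroup.center SL(2, R) ≃* rootsOfUnity 2 R :=
    Matrix.SpecialLinearGroup.center_equiv_rootsOfUnity' (0 : Fin 2)
  have : Finite (Subgroup.center SL(2, R)) := .of_equiv _ e.symm.toEquiv
  exact le_antisymm ((Nat.card_congr e.toEquiv).trans_le (card_rootsOfUnity R 2))
    ((Subgroup.one_lt_card_iff_ne_bot _).mpr h)

theorem sub_one_mul_sub_one_eq_zero {R : Type*} [CommRing R] {u : SL(2, R)}
    (hu : ((u : Matrix (Fin 2) (Fin 2) R) - 1).det = 0) :
    ((u : Matrix (Fin 2) (Fin 2) R) - 1) * (u - 1) = 0 := by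
  have det_u := u.det_coe
  rw [det_fin_two] at det_u hu
  ext i j
  fin_cases i <;> fin_cases j <;> simp [mul_apply, Fin.sum_univ_two] at hu ⊢ <;> grind

theorem one_add_pow_of_mul_self_eq_zero {A : Type*} [Semiring A] {N : A} (hN : N * N = 0)
    (k : ℕ) : (1 + N) ^ k = 1 + k * N := by
  induction k with
  | zero => simp
  | succ k ih =>
    rw [pow_succ, ih, mul_add, mul_one, add_mul, one_mul, mul_assoc, hN, mul_zero, add_zero,
      Nat.cast_succ, add_mul, one_mul, add_assoc]

theorem exists_eq_smul_one_add_pow_of_commute {p : ℕ} [Fact p.Prime]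
    {N B : Matrix (Fin 2) (Fin 2) (ZMod p)} (hN : N ≠ 0) (hNN : N * N = 0) (hNB : Commute N B)
    (hB : IsUnit B) : ∃ (x : ZMod p) (k : ℕ), B = x • (1 + N) ^ k := by
  have hNs : N ∉ Set.range (scalar (Fin 2)) := by
    rintro ⟨r, rfl⟩
    rw [← map_mul, ← map_zero (scalar (Fin 2)), scalar_inj, mul_self_eq_zero] at hNN
    exact hN (by rw [hNN, map_zero])
  obtain ⟨x, y, rfl⟩ := exists_eq_smul_one_add_smul_of_commute hNs hNB
  have hx : x ≠ 0 := by
    rintro rfl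
    apply hN
    rw [← hB.mul_left_eq_zero, zero_smul, zero_add, mul_smul_comm, hNN, smul_zero]
  refine ⟨x, (y / x).val, ?_⟩
  rw [one_add_pow_of_mul_self_eq_zero hNN, ← nsmul_eq_mul, ← Nat.cast_smul_eq_nsmul (ZMod p),
    ZMod.natCast_zmod_val, smul_add, smul_smul, mul_div_cancel₀ y hx]

end TwoByTwo

section ProjectiveSpecialLinearGroup

theorem nonempty_mulEquiv_klein_of_not_commute {F : Type*} [Field F] {H : Subgroup PSL(2, F)}
    [IsMulCommutative H] {a b : SL(2, F)} (ha : (a : PSL(2, F)) ∈ H) (hb : (b : PSL(2, F)) ∈ H)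
    (hab : ¬ Commute a b) : Nonempty (H ≃* Multiplicative (ZMod 2 × ZMod 2)) := by
  have center_ne_bot : Subgroup.center SL(2, F) ≠ ⊥ := fun h ↦ hab <|
    commutatorElement_eq_one_iff_commute.mp <| Subgroup.mem_bot.mp <|
      h ▸ commutatorElement_mem_center_of_mk_mem ha hb
  have card_center := card_center_eq_two_of_ne_bot center_ne_bot
  let eZ : Subgroup.center SL(2, F) ≃* Multiplicative (ZMod 2) :=
    mulEquivOfPrimeCardEq card_center (by simp)
  obtain ⟨e⟩ := nonempty_mulEquiv_center_prod_center (card_center.symm ▸ Nat.prime_two) ha hb hab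
    (centralizer_pair_le_center_of_not_commute hab)
  exact ⟨e.trans <| (eZ.prodCongr eZ).trans (MulEquiv.prodMultiplicative _ _).symm⟩

variable {p : ℕ} [Fact p.Prime]

theorem mk_mem_zpowers_mk_of_commute {u b : SL(2, ZMod p)} (hu : u ≠ 1)
    (hdet : ((u : Matrix (Fin 2) (Fin 2) (ZMod p)) - 1).det = 0) (hub : Commute u b) :
    (b : PSL(2, ZMod p)) ∈ Subgroup.zpowers (u : PSL(2, ZMod p)) := by
  have hu1 : (u : Matrix (Fin 2) (Fin 2) (ZMod p)) - 1 ≠ 0 := fun h ↦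
    hu (Subtype.ext (sub_eq_zero.mp h))
  have hub' : Commute ((u : Matrix (Fin 2) (Fin 2) (ZMod p)) - 1) b :=
    (hub.map Matrix.SpecialLinearGroup.coeMonoidHom).sub_left (Commute.one_left _)
  have hb : IsUnit (b : Matrix (Fin 2) (Fin 2) (ZMod p)) :=
    (isUnit_iff_isUnit_det _).mpr (by simp)
  obtain ⟨x, k, hbu⟩ := exists_eq_smul_one_add_pow_of_commute hu1
    (sub_one_mul_sub_one_eq_zero hdet) hub' hb
  have quotient_central : (u ^ k)⁻¹ * b ∈ Subgroup.center SL(2, ZMod p) := by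
    rw [← coe_mem_range_scalar_iff_mem_center]
    refine ⟨x, ?_⟩
    rw [Matrix.SpecialLinearGroup.coe_mul, hbu, add_sub_cancel, mul_smul_comm,
      ← Matrix.SpecialLinearGroup.coe_pow, ← Matrix.SpecialLinearGroup.coe_mul, inv_mul_cancel,
      Matrix.SpecialLinearGroup.coe_one, smul_one_eq_diagonal, scalar_apply]
  have mk_eq : ((u ^ k : SL(2, ZMod p)) : PSL(2, ZMod p)) = b :=
    QuotientGroup.eq.mpr quotient_central
  rw [← mk_eq]
  exact Subgroup.npow_mem_zpowers _ k

theorem isCyclic_of_forall_commute {H : Subgroup PSL(2, ZMod p)}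
    (hH : ∀ a b : SL(2, ZMod p), (a : PSL(2, ZMod p)) ∈ H → (b : PSL(2, ZMod p)) ∈ H →
      Commute a b) : IsCyclic H := by
  by_cases hu : ∃ u : SL(2, ZMod p), (u : PSL(2, ZMod p)) ∈ H ∧ u ≠ 1 ∧
      ((u : Matrix (Fin 2) (Fin 2) (ZMod p)) - 1).det = 0
  · obtain ⟨u, huH, hu1, hdet⟩ := hu
    have : H ≤ Subgroup.zpowers ↑u := fun x hx ↦ by
      induction x using QuotientGroup.induction_on with
      | H b => exact mk_mem_zpowers_mk_of_commute hu1 hdet (hH u b huH hx)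
    exact Subgroup.isCyclic_of_le this
  · push Not at hu
    let π := QuotientGroup.mk' (Subgroup.center SL(2, ZMod p))
    let ι : H.comap π →* Matrix (Fin 2) (Fin 2) (ZMod p) :=
      Matrix.SpecialLinearGroup.coeMonoidHom.comp (H.comap π).subtype
    have : IsMulCommutative (H.comap π) := .of_comm fun a b ↦ Subtype.ext (hH a b a.2 b.2)
    have : IsCyclic (H.comap π) := isCyclic_of_isUnit_map_sub_one ι fun u hu1 ↦ by
      rw [isUnit_iff_isUnit_det, isUnit_iff_ne_zero]
      exact hu u u.2 fun h ↦ hu1 (Subtype.ext h)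
    exact isCyclic_of_surjective _ (π.subgroupComap_surjective_of_surjective H
      (QuotientGroup.mk'_surjective _))

theorem abelian_subgroup_psl2_f11_cyclic_or_klein_general
    (H : Subgroup (Matrix.SpecialLinearGroup (Fin 2) (ZMod p) ⧸
      Subgroup.center (Matrix.SpecialLinearGroup (Fin 2) (ZMod p))))
    (hH : ∀ x y : H, x * y = y * x) :
    IsCyclic H ∨ Nonempty (H ≃* Multiplicative (ZMod 2 × ZMod 2)) := by
  have : IsMulCommutative H := .of_comm hH
  by_cases h : ∃ a b : SL(2, ZMod p), (a : PSL(2, ZMod p)) ∈ H ∧ (b : PSL(2, ZMod p)) ∈ H ∧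
      ¬ Commute a b
  · obtain ⟨a, b, ha, hb, hab⟩ := h
    exact .inr (nonempty_mulEquiv_klein_of_not_commute ha hb hab)
  · push Not at h
    exact .inl (isCyclic_of_forall_commute h)

end ProjectiveSpecialLinearGroup

/-- Every abelian subgroup of PSL(2, F_11) is cyclic or isomorphic to (ℤ/2ℤ)². -/
theorem abelian_subgroup_psl2_f11_cyclic_or_klein
    (H : Subgroup (Matrix.SpecialLinearGroup (Fin 2) (ZMod 11) ⧸
      Subgroup.center (Matrix.SpecialLinearGroup (Fin 2) (ZMod 11))))
    (hH : ∀ x y : H, x * y = y * x) :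
    IsCyclic H ∨ Nonempty (H ≃* Multiplicative (ZMod 2 × ZMod 2)) :=
  have : Fact (Nat.Prime 11) := ⟨by norm_num⟩
  abelian_subgroup_psl2_f11_cyclic_or_klein_general H hH
end

section
/- Every Sylow 2-subgroup of PSL(2, F_11) is isomorphic to (Z/2Z)^2. -/
/-!
Let `F` be a finite field of `q` elements in which `2` is not a square, for instance `ZMod 11`. Then
`q ≡ ±3 mod 8`, so `|PSL(2, F)| = q (q² - 1) / 2` is divisible by `4` but not by `8`, and a Sylow
2-subgroup has order `4`. Moreover `PSL(2, F)` has no element of order `4`: by Cayley–Hamilton, a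
matrix `A` of determinant `1` and trace `t` satisfies `A⁴ = t (t² - 2) A - (t² - 1)`. Since
`t² ≠ 2`, a central `A⁴` forces either `A` to be central, or `t = 0` and `A² = -1`.
-/

section

open Matrix
open scoped MatrixGroups

theorem card_specialLinearGroup_mul_card_units (n R : Type*) [Fintype n] [DecidableEq n]
    [Nonempty n] [CommRing R] :
    Nat.card (SpecialLinearGroup n R) * Nat.card Rˣ = Nat.card (GL n R) := by
  let det : GL n R →* Rˣ := GeneralLinearGroup.det
  have range_eq_ker : (SpecialLinearGroup.toGL (n := n) (R := R)).range = det.ker :=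
    SetLike.coe_injective SpecialLinearGroup.range_toGL
  have card_ker : Nat.card det.ker = Nat.card (SpecialLinearGroup n R) := by
    rw [← range_eq_ker]
    exact (Nat.card_congr
      (MonoidHom.ofInjective SpecialLinearGroup.toGL_injective).toEquiv).symm
  have index_ker : det.ker.index = Nat.card Rˣ := by
    rw [Subgroup.index_ker,
      MonoidHom.range_eq_top_of_surjective det GeneralLinearGroup.det_surjective,
      Subgroup.card_top]
  rw [← card_ker, ← index_ker, Subgroup.card_mul_index]

theorem card_specialLinearGroup_fin_two (F : Type*) [Field F] [Finite F] :
    Nat.card SL(2, F) = Nat.card F * (Nat.card F ^ 2 - 1) := by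
  have := Fintype.ofFinite F
  have card_GL : Nat.card (GL (Fin 2) F) =
      (Nat.card F ^ 2 - 1) * (Nat.card F ^ 2 - Nat.card F) := by
    simpa [Fin.prod_univ_two, ← Nat.card_eq_fintype_card] using card_GL_field (𝔽 := F) 2
  have card_units_pos : 0 < Nat.card Fˣ := Nat.card_pos
  refine Nat.eq_of_mul_eq_mul_right card_units_pos ?_
  rw [card_specialLinearGroup_mul_card_units, card_GL, Nat.card_units,
    show Nat.card F ^ 2 - Nat.card F = Nat.card F * (Nat.card F - 1) by
      rw [Nat.mul_sub_one, sq]]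
  ring

theorem card_center_specialLinearGroup_fin_two {R : Type*} [CommRing R] [IsDomain R]
    (hR : ringChar R ≠ 2) : Nat.card (Subgroup.center SL(2, R)) = 2 := by
  rw [Nat.card_congr (SpecialLinearGroup.center_equiv_rootsOfUnity' (0 : Fin 2)).toEquiv,
    Fintype.card_fin]
  exact (IsPrimitiveRoot.neg_one (ringChar R) hR).card_rootsOfUnity

theorem card_projectiveSpecialLinearGroup_fin_two_mul_two {F : Type*} [Field F] [Finite F]
    (hF : ringChar F ≠ 2) :
    Nat.card PSL(2, F) * 2 = Nat.card F * (Nat.card F ^ 2 - 1) := by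
  rw [← card_specialLinearGroup_fin_two,
    Subgroup.card_eq_card_quotient_mul_card_subgroup (Subgroup.center SL(2, F)),
    card_center_specialLinearGroup_fin_two hF]

theorem matrix_fin_two_sq {R : Type*} [CommRing R] (M : Matrix (Fin 2) (Fin 2) R) :
    M ^ 2 = M.trace • M - M.det • 1 := by
  nontriviality R
  have cayley_hamilton := M.aeval_self_charpoly
  simp only [charpoly_fin_two, map_add, map_sub, map_mul, map_pow, Polynomial.aeval_X,
    Polynomial.aeval_C, Algebra.algebraMap_eq_smul_one, smul_mul_assoc, one_mul] at cayley_hamilton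
  rw [← sub_eq_zero, ← cayley_hamilton]
  abel

theorem matrix_fin_two_pow_four {R : Type*} [CommRing R] (M : Matrix (Fin 2) (Fin 2) R) :
    M ^ 4 = (M.trace * (M.trace ^ 2 - 2 * M.det)) • M - (M.det * (M.trace ^ 2 - M.det)) • 1 := by
  set t := M.trace
  set d := M.det
  have hsq : M ^ 2 = t • M - d • 1 := matrix_fin_two_sq M
  calc M ^ 4 = (t • M - d • 1) ^ 2 := by rw [← hsq, ← pow_mul]
    _ = t ^ 2 • M ^ 2 - (2 * t * d) • M + d ^ 2 • 1 := by
      simp only [sq, sub_mul, mul_sub, smul_mul_assoc, mul_smul_comm, one_mul, mul_one]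
      module
    _ = (t * (t ^ 2 - 2 * d)) • M - (d * (t ^ 2 - d)) • 1 := by
      rw [hsq]
      module

theorem sq_mem_center_of_pow_four_mem_center {R : Type*} [CommRing R] [IsDomain R]
    (h2 : ¬IsSquare (2 : R)) {A : SL(2, R)} (hA : A ^ 4 ∈ Subgroup.center SL(2, R)) :
    A ^ 2 ∈ Subgroup.center SL(2, R) := by
  by_cases ht : A.1.trace = 0
  · have sq_eq_neg_one : A ^ 2 = -1 := by
      apply Subtype.ext
      simpa [ht] using matrix_fin_two_sq A.1
    simp [sq_eq_neg_one, Subgroup.mem_center_iff]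
  · have ht2 : A.1.trace ^ 2 - 2 ≠ 0 := fun h ↦ h2 ⟨A.1.trace, by rw [← sq, sub_eq_zero.1 h]⟩
    suffices A ∈ Subgroup.center SL(2, R) from pow_mem this 2
    refine Subgroup.mem_center_iff.2 fun B ↦ Subtype.ext ?_
    have commute_pow_four : B.1 * A.1 ^ 4 = A.1 ^ 4 * B.1 :=
      congrArg Subtype.val (Subgroup.mem_center_iff.1 hA B)
    apply smul_right_injective _ (mul_ne_zero ht ht2)
    simpa [matrix_fin_two_pow_four, mul_sub, sub_mul] using commute_pow_four

theorem projectiveSpecialLinearGroup_fin_two_orderOf_ne_four {R : Type*} [CommRing R] [IsDomain R]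
    (h2 : ¬IsSquare (2 : R)) (x : PSL(2, R)) : orderOf x ≠ 4 := by
  intro hx
  obtain ⟨A, rfl⟩ := QuotientGroup.mk_surjective x
  have pow_four_mem : A ^ 4 ∈ Subgroup.center SL(2, R) := by
    rw [← QuotientGroup.eq_one_iff, QuotientGroup.mk_pow, ← hx, pow_orderOf_eq_one]
  have sq_eq_one : (A : PSL(2, R)) ^ 2 = 1 := by
    rw [← QuotientGroup.mk_pow, QuotientGroup.eq_one_iff]
    exact sq_mem_center_of_pow_four_mem_center h2 pow_four_mem
  have : 4 ≤ 2 := hx ▸ orderOf_le_of_pow_eq_one two_pos sq_eq_one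
  omega

theorem mul_sq_sub_one_mod_sixteen {q : ℕ} (hq : q % 8 = 3 ∨ q % 8 = 5) :
    q * (q ^ 2 - 1) % 16 = 8 := by
  have mod_sixteen : q % 16 = 3 ∨ q % 16 = 5 ∨ q % 16 = 11 ∨ q % 16 = 13 := by omega
  have cube_mod : q ^ 3 % 16 = (q % 16) ^ 3 % 16 := Nat.pow_mod q 3 16
  have mul_eq : q * (q ^ 2 - 1) = q ^ 3 - q := by rw [Nat.mul_sub_one, ← pow_succ']
  have le_cube : q ≤ q ^ 3 := Nat.le_self_pow three_ne_zero q
  rw [mul_eq]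
  rcases mod_sixteen with h | h | h | h <;> rw [h] at cube_mod <;> omega

theorem card_sylow_eq_pow {G : Type*} [Group G] [Finite G] {p k : ℕ} [Fact p.Prime]
    (P : Sylow p G) (dvd : p ^ k ∣ Nat.card G) (not_dvd : ¬p ^ (k + 1) ∣ Nat.card G) :
    Nat.card P = p ^ k := by
  have hp : p.Prime := Fact.out
  rw [hp.pow_dvd_iff_le_factorization Nat.card_pos.ne'] at dvd not_dvd
  rw [P.card_eq_multiplicity, show (Nat.card G).factorization p = k by omega]

theorem card_sylow_two_projectiveSpecialLinearGroup_fin_two {F : Type*} [Field F] [Finite F]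
    (h2 : ¬IsSquare (2 : F)) (P : Sylow 2 PSL(2, F)) : Nat.card P = 4 := by
  have := Fintype.ofFinite F
  have hF : ringChar F ≠ 2 := fun h ↦ h2 (FiniteField.isSquare_of_char_two h 2)
  have card_field_mod_eight : Nat.card F % 8 = 3 ∨ Nat.card F % 8 = 5 := by
    rw [FiniteField.isSquare_two_iff, ← Nat.card_eq_fintype_card] at h2
    tauto
  have card_psl_mod_eight : Nat.card PSL(2, F) % 8 = 4 := by
    have := card_projectiveSpecialLinearGroup_fin_two_mul_two hF
    have := mul_sq_sub_one_mod_sixteen card_field_mod_eight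
    omega
  exact card_sylow_eq_pow P (k := 2) (by omega) (by omega)

theorem isKleinFour_of_card_eq_four {G : Type*} [Group G] (hG : Nat.card G = 4)
    (h : ∀ x : G, orderOf x ≠ 4) : IsKleinFour G where
  card_four := hG
  exponent_two := by
    rw [← not_isCyclic_iff_exponent_eq_prime Nat.prime_two hG]
    intro hcyclic
    obtain ⟨x, hx⟩ := IsCyclic.exists_ofOrder_eq_natCard (α := G)
    exact h x (hx.trans hG)

theorem sylow_two_psl2_f11_klein_general {F : Type*} [Field F] [Finite F]
    (h2 : ¬IsSquare (2 : F)) (P : Sylow 2 PSL(2, F)) :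
    Nonempty (P ≃* Multiplicative (ZMod 2 × ZMod 2)) := by
  have : IsKleinFour P :=
    isKleinFour_of_card_eq_four (card_sylow_two_projectiveSpecialLinearGroup_fin_two h2 P)
      fun x ↦ Subgroup.orderOf_coe x ▸ projectiveSpecialLinearGroup_fin_two_orderOf_ne_four h2 x
  exact IsKleinFour.nonempty_mulEquiv

end

/-- Every Sylow 2-subgroup of PSL(2, F_11) is isomorphic to (ℤ/2ℤ)². -/
theorem sylow_two_psl2_f11_klein
    (P : Sylow 2 (Matrix.SpecialLinearGroup (Fin 2) (ZMod 11) ⧸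
      Subgroup.center (Matrix.SpecialLinearGroup (Fin 2) (ZMod 11)))) :
    Nonempty (P ≃* Multiplicative (ZMod 2 × ZMod 2)) :=
  have : Fact (Nat.Prime 11) := ⟨by norm_num⟩
  sylow_two_psl2_f11_klein_general (F := ZMod 11) (by norm_num [ZMod.exists_sq_eq_two_iff]) P
end

section
/- Let U be an irreducible complex representation of SL(2, F_8) of dimension 9, and let χ_U be its character. Then for every nonzero a ∈ F_8, the value of χ_U at the unipotent matrix with rows (1, a) and (0, 1) equals 1. -/
open Matrix

/-!
Let `N ≅ F` be the group of unipotent upper triangular matrices in `SL(2, F)`, where `F` is a finite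
field of characteristic two, and let `q` be the cardinality of `F`. Since every element of `F` is a
square, conjugation by `diag(t, t⁻¹)` makes all nontrivial elements of `N` conjugate. They are
involutions, so the character of a representation of `SL(2, F)` takes a single integral value `c`
on them. If `d` is the dimension of the representation and `m` that of its space of `N`-invariants,
then averaging the character over `N` yields `d = m + (q - 1) * r` and `c = m - r` for some natural
number `r`. As `SL(2, F)` is generated by conjugates of `N`, the representation is trivial if
`r = 0`. Hence a nontrivial representation with `d < 2 * (q - 1)` has `r = 1`, that is, `c = d - q`.
-/

theorem trace_eq_two_mul_finrank_ker_sub_finrank {K V : Type*} [Field K] [NeZero (2 : K)]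
    [AddCommGroup V] [Module K V] [FiniteDimensional K V] {T : Module.End K V} (hT : T * T = 1) :
    LinearMap.trace K V T =
      2 * Module.finrank K (LinearMap.ker (T - 1)) - Module.finrank K V := by
  have h2 : (2 : K) ≠ 0 := two_ne_zero
  have hT' (v : V) : T (T v) = v := LinearMap.congr_fun hT v
  have hproj : LinearMap.IsProj (LinearMap.ker (T - 1)) ((2 : K)⁻¹ • (1 + T)) := by
    refine ⟨fun v ↦ by simp [hT', add_comm], fun v hv ↦ ?_⟩
    have hv : T v = v := by simpa [sub_eq_zero] using hv
    rw [LinearMap.smul_apply, LinearMap.add_apply, Module.End.one_apply, hv, ← two_smul K v,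
      inv_smul_smul₀ h2]
  have htrace := hproj.trace
  simp only [map_smul, map_add, LinearMap.trace_one, smul_eq_mul] at htrace
  rw [← htrace, mul_inv_cancel_left₀ h2, add_sub_cancel_left]

theorem finrank_eq_one_of_simple_of_isTrivial {K G : Type*} [Field K] [IsAlgClosed K] [Group G]
    (U : FDRep K G) [CategoryTheory.Simple U] [Representation.IsTrivial U.ρ] :
    Module.finrank K U = 1 := by
  have : (Representation.linHom U.ρ U.ρ).IsTrivial := ⟨fun g ↦ by ext; simp⟩
  have hschur := CategoryTheory.finrank_endomorphism_simple_eq_one K U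
  rw [← (Representation.linHom.invariantsEquivFDRepHom U U).finrank_eq,
    Representation.invariants_eq_top, finrank_top, Module.finrank_linearMap] at hschur
  exact Nat.eq_one_of_mul_eq_one_left hschur

section ConstantCharacter

variable {K G V : Type*} [Field K] [Group G] [AddCommGroup V] [Module K V] [FiniteDimensional K V]
  {σ : Representation K G V}

theorem isTrivial_of_finrank_invariants_eq
    (h : Module.finrank K σ.invariants = Module.finrank K V) : σ.IsTrivial where
  out g := by
    ext v
    have hv : v ∈ σ.invariants := Submodule.eq_top_of_finrank_eq h ▸ Submodule.mem_top
    exact hv g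

variable [Finite G]

theorem card_mul_finrank_invariants_of_character_eq [NeZero (Nat.card G : K)] {c : K}
    (hc : ∀ g ≠ 1, σ.character g = c) :
    (Nat.card G : K) * Module.finrank K σ.invariants =
      Module.finrank K V + (Nat.card G - 1) * c := by
  classical
  have := Fintype.ofFinite G
  have := invertibleOfNonzero (NeZero.ne (Nat.card G : K))
  have hsum : ∑ g ∈ Finset.univ.erase (1 : G), σ.character g = (Nat.card G - 1) * c := by
    rw [Finset.sum_congr rfl fun g hg ↦ hc g (Finset.ne_of_mem_erase hg)]
    simp [Finset.card_erase_of_mem, Nat.cast_pred Fintype.card_pos]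
  rw [← σ.card_inv_mul_sum_char_eq_finrank, mul_inv_cancel_left₀ (NeZero.ne _),
    ← Finset.add_sum_erase _ _ (Finset.mem_univ 1), hsum, σ.char_one]

variable [CharZero K] [Nontrivial G] {c : ℤ}

/-- If `G` is abelian and `K` is algebraically closed, then `r` is the common multiplicity in `σ` of
the nontrivial linear characters of `G`. -/
theorem exists_finrank_eq_of_character_eq_intCast (hc : ∀ g ≠ 1, σ.character g = c) :
    ∃ r : ℕ, Module.finrank K V = Module.finrank K σ.invariants + (Nat.card G - 1) * r ∧
      c = Module.finrank K σ.invariants - r := by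
  have hcard : 1 < Nat.card G := Finite.one_lt_card
  have hle : Module.finrank K σ.invariants ≤ Module.finrank K V := Submodule.finrank_le _
  have hsum : (Nat.card G : ℤ) * Module.finrank K σ.invariants =
      Module.finrank K V + (Nat.card G - 1) * c := by
    exact_mod_cast card_mul_finrank_invariants_of_character_eq hc
  have hr : 0 ≤ Module.finrank K σ.invariants - c := by
    refine nonneg_of_mul_nonneg_right (a := (Nat.card G - 1 : ℤ)) ?_ (by lia)
    linear_combination (Nat.cast_le (α := ℤ)).mpr hle - hsum
  obtain ⟨r, hr⟩ := Int.eq_ofNat_of_zero_le hr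
  refine ⟨r, ?_, by lia⟩
  zify [hcard.le]
  linear_combination (Nat.card G - 1) * hr - hsum

theorem eq_finrank_sub_card_of_character_eq_intCast (hσ : ¬ σ.IsTrivial)
    (hdim : Module.finrank K V < 2 * (Nat.card G - 1)) (hc : ∀ g ≠ 1, σ.character g = c) :
    c = Module.finrank K V - Nat.card G := by
  have hcard : 1 < Nat.card G := Finite.one_lt_card
  obtain ⟨r, hfinrank, rfl⟩ := exists_finrank_eq_of_character_eq_intCast hc
  have hr₀ : r ≠ 0 := by
    rintro rfl
    exact hσ (isTrivial_of_finrank_invariants_eq (by simpa using hfinrank.symm))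
  have hr₂ : r < 2 := by
    by_contra! hr
    nlinarith
  obtain rfl : r = 1 := by lia
  lia

end ConstantCharacter

section Transvection

open Matrix.SpecialLinearGroup MatrixGroups

section CommRing

variable {R : Type*} [CommRing R]

/-- The root subgroup of the special linear group at the position `(i, j)`, parametrized by the
additive group of the ring. Restricting a representation of `SL(2, R)` along it for `i = 0`, `j = 1`
yields its restriction to the unipotent upper triangular matrices. -/
def transvectionHom {ι : Type*} [DecidableEq ι] [Fintype ι] {i j : ι} (hij : i ≠ j) :
    Multiplicative R →* SpecialLinearGroup ι R where
  toFun x := transvection hij x.toAdd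
  map_one' := transvection_coeff_zero hij
  map_mul' x y := transvection_add hij x.toAdd y.toAdd

theorem transvection_mul_self {ι : Type*} [DecidableEq ι] [Fintype ι] [CharP R 2] {i j : ι}
    (hij : i ≠ j) (a : R) : transvection hij a * transvection hij a = 1 := by
  rw [← transvection_add, CharTwo.add_self_eq_zero, transvection_coeff_zero]

theorem coe_transvection_zero_one (a : R) :
    (transvection (zero_ne_one : (0 : Fin 2) ≠ 1) a).1 = !![1, a; 0, 1] := by
  ext i j
  fin_cases i <;> fin_cases j <;> simp [transvection_coe]

theorem coe_transvection_one_zero (a : R) :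
    (transvection (one_ne_zero : (1 : Fin 2) ≠ 0) a).1 = !![1, 0; a, 1] := by
  ext i j
  fin_cases i <;> fin_cases j <;> simp [transvection_coe]

theorem isConj_transvection_zero_one_transvection_one_zero (a : R) :
    IsConj (transvection zero_ne_one (-a) : SL(2, R)) (transvection one_ne_zero a) := by
  let w : SL(2, R) := ⟨!![0, 1; -1, 0], by simp⟩
  have hw : w.1 = !![0, 1; -1, 0] := rfl
  refine isConj_iff.mpr ⟨w, mul_inv_eq_iff_eq_mul.mpr (Subtype.ext ?_)⟩
  simp [hw, coe_transvection_zero_one, coe_transvection_one_zero]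

end CommRing

section Field

variable {F : Type*} [Field F]

theorem diag2_mul_transvection_mul_inv {t : F} (ht : t ≠ 0) (a : F) :
    diag2 t ht * transvection zero_ne_one a * (diag2 t ht)⁻¹ =
      transvection zero_ne_one (t ^ 2 * a) := by
  refine mul_inv_eq_iff_eq_mul.mpr (Subtype.ext ?_)
  suffices t * a = t ^ 2 * a * t⁻¹ by simpa [coe_transvection_zero_one, diag2_coe']
  field_simp

theorem isConj_transvection_zero_one [CharP F 2] [PerfectRing F 2] {a b : F} (ha : a ≠ 0)
    (hb : b ≠ 0) :
    IsConj (transvection zero_ne_one a : SL(2, F)) (transvection zero_ne_one b) := by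
  obtain ⟨t, ht⟩ : ∃ t, t ^ 2 = b / a := surjective_frobenius F 2 (b / a)
  have ht₀ : t ≠ 0 := by
    rintro rfl
    simp [ha, hb, eq_comm] at ht
  refine isConj_iff.mpr ⟨diag2 t ht₀, ?_⟩
  rw [diag2_mul_transvection_mul_inv, ht, div_mul_cancel₀ _ ha]

theorem eq_one_of_map_transvection_zero_one {M : Type*} [Monoid M] (φ : SL(2, F) →* M)
    (hφ : ∀ a, φ (transvection zero_ne_one a) = 1) : φ = 1 := by
  ext g
  induction g using SL2.transvection_induction with
  | htransvec i j hij a =>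
    fin_cases i <;> fin_cases j
    · exact absurd rfl hij
    · exact hφ a
    · have hconj := φ.map_isConj (isConj_transvection_zero_one_transvection_one_zero a)
      rwa [hφ, isConj_one_right] at hconj
    · exact absurd rfl hij
  | hmul A B hA hB => simp [hA, hB]

end Field

end Transvection

open MatrixGroups in
theorem char_sl2_f8_dim9_unipotent_general {K F V : Type*} [Field K] [CharZero K] [Field F]
    [Finite F] [CharP F 2] [AddCommGroup V] [Module K V] [FiniteDimensional K V]
    (ρ : Representation K SL(2, F) V) (hρ : ¬ ρ.IsTrivial)
    (hdim : Module.finrank K V < 2 * (Nat.card F - 1)) {a : F} (ha : a ≠ 0) {g : SL(2, F)}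
    (hg : (g : Matrix (Fin 2) (Fin 2) F) = !![1, a; 0, 1]) :
    ρ.character g = Module.finrank K V - Nat.card F := by
  obtain rfl : g = SpecialLinearGroup.transvection zero_ne_one a :=
    Subtype.ext (hg.trans (coe_transvection_zero_one a).symm)
  let σ : Representation K (Multiplicative F) V := ρ.comp (transvectionHom zero_ne_one)
  have hσ : ¬ σ.IsTrivial := fun h ↦
    hρ ⟨DFunLike.congr_fun <| eq_one_of_map_transvection_zero_one ρ fun b ↦ h.out (.ofAdd b)⟩
  obtain ⟨c, hc⟩ : ∃ c : ℤ, ρ.character (SpecialLinearGroup.transvection zero_ne_one a) = c := by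
    refine ⟨_, (trace_eq_two_mul_finrank_ker_sub_finrank ?_).trans (by norm_cast)⟩
    rw [← map_mul, transvection_mul_self, map_one]
  have hconst (x : Multiplicative F) (hx : x ≠ 1) : σ.character x = c := by
    obtain ⟨t, ht⟩ := isConj_iff.mp (isConj_transvection_zero_one (b := x.toAdd) ha hx)
    rw [← hc, ← ρ.char_conj _ t, ht]
    rfl
  rw [hc, eq_finrank_sub_card_of_character_eq_intCast hσ hdim hconst]
  norm_cast

/-- If U is an irreducible 9-dimensional complex representation of SL(2, F_8),
then its character takes the value 1 at every nontrivial unipotent upper-triangular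
matrix !![1, a; 0, 1] with a ≠ 0. -/
theorem char_sl2_f8_dim9_unipotent
    (U : FDRep ℂ (Matrix.SpecialLinearGroup (Fin 2) (GaloisField 2 3)))
    [CategoryTheory.Simple U]
    (hdim : Module.finrank ℂ U = 9)
    (a : GaloisField 2 3) (ha : a ≠ 0)
    (g : Matrix.SpecialLinearGroup (Fin 2) (GaloisField 2 3))
    (hg : (g : Matrix (Fin 2) (Fin 2) (GaloisField 2 3)) = !![1, a; 0, 1]) :
    U.character g = 1 := by
  have hcard : Nat.card (GaloisField 2 3) = 8 := by rw [GaloisField.card 2 3 (by simp)]; rfl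
  have hU : ¬ Representation.IsTrivial U.ρ := fun _ ↦ by
    simp [finrank_eq_one_of_simple_of_isTrivial] at hdim
  refine (char_sl2_f8_dim9_unipotent_general U.ρ hU (by lia) ha hg).trans ?_
  norm_num [hdim, hcard]
end

section
/- Let N be a finite group in which every element has order dividing 2 (an elementary abelian 2-group), and let ρ be a representation of N on a finite-dimensional complex vector space U preserving a nondegenerate symmetric bilinear form B. Assume that for every nontrivial homomorphism λ : N → ℂ*, the eigenspace {v ∈ U : ρ(g)v = λ(g)·v for all g ∈ N} has dimension at most 1, and that the fixed subspace U^N = {v ∈ U : ρ(g)v = v for all g ∈ N} has dimension at most 2. Then every N-invariant subspace L of U on which B vanishes identically (i.e., B(v, w) = 0 for all v, w ∈ L) has dimension at most 1. -/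
/-!
An involution preserving `B` is self-adjoint for `B`, so the joint eigenspaces of `N` are pairwise
orthogonal; as they span `U`, the form `B` stays nondegenerate on each of them. An isotropic
subspace therefore meets each joint eigenspace in at most half of its dimension. This intersection
vanishes for every nontrivial character, while an invariant subspace is the sum of its
intersections with the joint eigenspaces, so it lies in the fixed subspace, where it fills at most
half of the dimension.
-/

open Module

section JointEigenspace

variable {ι R M : Type*} [CommRing R] [AddCommGroup M] [Module R M]

/-- The simultaneous eigenspace of a family `f` of endomorphisms for a family `χ` of scalars. If
`f` is a representation on a vector space, this is the isotypic component of the linear character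
`χ`; arbitrary functions `χ` are allowed because those that are not characters give the zero
space. -/
def jointEigenspace (f : ι → End R M) (χ : ι → R) : Submodule R M :=
  ⨅ i, (f i).eigenspace (χ i)

theorem mem_jointEigenspace_iff {f : ι → End R M} {χ : ι → R} {v : M} :
    v ∈ jointEigenspace f χ ↔ ∀ i, f i v = χ i • v := by
  simp only [jointEigenspace, Submodule.mem_iInf, End.mem_eigenspace_iff]

theorem maxGenEigenspace_eq_eigenspace_of_iSup_eigenspace_eq_top [IsDomain R] [IsTorsionFree R M]
    {f : End R M} (hf : ⨆ μ, f.eigenspace μ = ⊤) (μ : R) : f.maxGenEigenspace μ = f.eigenspace μ :=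
  (congrFun ((f.independent_maxGenEigenspace.le_iff_eq_of_iSup_eq_top hf).1
    fun _ ↦ f.genEigenspace_le_maximal _ _) μ).symm

theorem map_subtype_jointEigenspace_restrict_le {f : ι → End R M} {L : Submodule R M}
    (hL : ∀ i, ∀ v ∈ L, f i v ∈ L) (χ : ι → R) :
    (jointEigenspace (fun i ↦ (f i).restrict (hL i)) χ).map L.subtype ≤
      L ⊓ jointEigenspace f χ := by
  rintro _ ⟨v, hv, rfl⟩
  exact ⟨v.2, mem_jointEigenspace_iff.2 fun i ↦
    congrArg Subtype.val (mem_jointEigenspace_iff.1 hv i)⟩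

section FiniteDimensional

variable {K V : Type*} [Field K] [AddCommGroup V] [Module K V] [FiniteDimensional K V]
  {f : ι → End K V}

theorem iSup_jointEigenspace_eq_top (hcomm : ∀ i j, Commute (f i) (f j))
    (hdiag : ∀ i, ⨆ μ, (f i).eigenspace μ = ⊤) : ⨆ χ, jointEigenspace f χ = ⊤ := by
  have hgen (i : ι) (μ : K) : (f i).maxGenEigenspace μ = (f i).eigenspace μ :=
    maxGenEigenspace_eq_eigenspace_of_iSup_eigenspace_eq_top (hdiag i) μ
  simpa only [jointEigenspace, hgen] using
    End.iSup_iInf_maxGenEigenspace_eq_top_of_iSup_maxGenEigenspace_eq_top_of_commute f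
      (fun i j _ ↦ hcomm i j) (by simpa only [hgen] using hdiag)

theorem iSup_inf_jointEigenspace_eq (hcomm : ∀ i j, Commute (f i) (f j))
    (hdiag : ∀ i, ⨆ μ, (f i).eigenspace μ = ⊤) {L : Submodule K V} (hL : ∀ i, ∀ v ∈ L, f i v ∈ L) :
    ⨆ χ, L ⊓ jointEigenspace f χ = L := by
  refine le_antisymm (iSup_le fun _ ↦ inf_le_left) ?_
  have htop : ⨆ χ, jointEigenspace (fun i ↦ (f i).restrict (hL i)) χ = ⊤ :=
    iSup_jointEigenspace_eq_top (fun i j ↦ LinearMap.restrict_commute (hcomm i j) (hL i) (hL j))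
      fun i ↦ End.genEigenspace_restrict_eq_top (hL i) (hdiag i)
  calc
    L = (⨆ χ, jointEigenspace (fun i ↦ (f i).restrict (hL i)) χ).map L.subtype := by
      rw [htop, Submodule.map_subtype_top]
    _ = ⨆ χ, (jointEigenspace (fun i ↦ (f i).restrict (hL i)) χ).map L.subtype :=
      Submodule.map_iSup _ _
    _ ≤ ⨆ χ, L ⊓ jointEigenspace f χ :=
      iSup_mono (map_subtype_jointEigenspace_restrict_le hL)

end FiniteDimensional

end JointEigenspace

section SelfAdjointFamily

variable {ι R M : Type*} [CommRing R] [AddCommGroup M] [Module R M]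
  {f : ι → End R M} {B : LinearMap.BilinForm R M}

theorem apply_eq_zero_of_mem_jointEigenspace [IsDomain R] (hadj : ∀ i, B.IsSelfAdjoint (f i))
    {χ ψ : ι → R} (hne : χ ≠ ψ) {v w : M} (hv : v ∈ jointEigenspace f χ)
    (hw : w ∈ jointEigenspace f ψ) : B v w = 0 := by
  obtain ⟨i, hi⟩ := Function.ne_iff.1 hne
  have heq : χ i * B v w = ψ i * B v w := by
    simpa [mem_jointEigenspace_iff.1 hv i, mem_jointEigenspace_iff.1 hw i] using hadj i v w
  exact (mul_eq_mul_right_iff.1 heq).resolve_left hi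

theorem separatingLeft_restrict_jointEigenspace [IsDomain R] (hadj : ∀ i, B.IsSelfAdjoint (f i))
    (hB : B.SeparatingLeft) (hspan : ⨆ χ, jointEigenspace f χ = ⊤) (χ : ι → R) :
    (B.restrict (jointEigenspace f χ)).SeparatingLeft := by
  have hcodisj : Codisjoint (jointEigenspace f χ) (⨆ (ψ) (_ : ψ ≠ χ), jointEigenspace f ψ) := by
    rw [codisjoint_iff, ← iSup_split_single, hspan]
  have hortho : ⨆ (ψ) (_ : ψ ≠ χ), jointEigenspace f ψ ≤ B.orthogonal (jointEigenspace f χ) :=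
    iSup₂_le fun _ hψ _ hw _ hv ↦ apply_eq_zero_of_mem_jointEigenspace hadj hψ.symm hv hw
  rw [LinearMap.separatingLeft_iff_ker_eq_bot,
    LinearMap.BilinForm.ker_restrict_eq_of_codisjoint hcodisj fun v hv w hw ↦ hortho hw v hv,
    LinearMap.separatingLeft_iff_ker_eq_bot.1 hB, Submodule.comap_bot, Submodule.ker_subtype]

end SelfAdjointFamily

section Isotropic

variable {ι K V : Type*} [Field K] [AddCommGroup V] [Module K V] [FiniteDimensional K V]
  {f : ι → End K V} {B : LinearMap.BilinForm K V} {L : Submodule K V}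

theorem two_mul_finrank_le_finrank_of_le_orthogonal (hB : B.SeparatingLeft)
    (hL : L ≤ B.orthogonal L) : 2 * finrank K L ≤ finrank K V := by
  have hadd : finrank K L + finrank K (B.orthogonal L) = finrank K V := by
    rw [B.finrank_add_finrank_orthogonal', LinearMap.separatingLeft_iff_ker_eq_bot.1 hB, inf_bot_eq,
      finrank_bot, add_zero]
  have hle : finrank K L ≤ finrank K (B.orthogonal L) := Submodule.finrank_mono hL
  lia

theorem two_mul_finrank_inf_jointEigenspace_le (hB : B.SeparatingLeft)
    (hadj : ∀ i, B.IsSelfAdjoint (f i)) (hiso : L ≤ B.orthogonal L)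
    (hspan : ⨆ χ, jointEigenspace f χ = ⊤) (χ : ι → K) :
    2 * finrank K ↥(L ⊓ jointEigenspace f χ) ≤ finrank K (jointEigenspace f χ) := by
  rw [inf_comm, ← Submodule.map_comap_subtype, Submodule.finrank_map_subtype_eq]
  exact two_mul_finrank_le_finrank_of_le_orthogonal
    (separatingLeft_restrict_jointEigenspace hadj hB hspan χ)
    fun w hw v hv ↦ hiso hw v hv

theorem le_jointEigenspace_of_finrank_le_one (hB : B.SeparatingLeft)
    (hadj : ∀ i, B.IsSelfAdjoint (f i)) (hiso : L ≤ B.orthogonal L)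
    (hcomm : ∀ i j, Commute (f i) (f j)) (hdiag : ∀ i, ⨆ μ, (f i).eigenspace μ = ⊤)
    (hL : ∀ i, ∀ v ∈ L, f i v ∈ L) {χ : ι → K}
    (hdim : ∀ ψ ≠ χ, finrank K (jointEigenspace f ψ) ≤ 1) : L ≤ jointEigenspace f χ := by
  have hspan := iSup_jointEigenspace_eq_top hcomm hdiag
  rw [← iSup_inf_jointEigenspace_eq hcomm hdiag hL]
  refine iSup_le fun ψ ↦ ?_
  rcases eq_or_ne ψ χ with rfl | hψ
  · exact inf_le_right
  · have hhalf := two_mul_finrank_inf_jointEigenspace_le hB hadj hiso hspan ψ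
    have hzero : L ⊓ jointEigenspace f ψ = ⊥ :=
      Submodule.finrank_eq_zero.1 (by have := hdim ψ hψ; lia)
    exact hzero.trans_le bot_le

end Isotropic

section Involution

variable {R M : Type*} [CommRing R] [AddCommGroup M] [Module R M] {f : End R M}

theorem iSup_eigenspace_eq_top_of_sq_eq_one (h2 : IsUnit (2 : R)) (hf : f ^ 2 = 1) :
    ⨆ μ, f.eigenspace μ = ⊤ := by
  have hff (v : M) : f (f v) = v := by simpa [sq] using LinearMap.congr_fun hf v
  refine Submodule.eq_top_iff'.2 fun v ↦ ?_
  have hplus : v + f v ∈ f.eigenspace 1 := by simp [hff, add_comm]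
  have hminus : v - f v ∈ f.eigenspace (-1) := by simp [hff]
  have hv : (v + f v) + (v - f v) = (2 : R) • v := by rw [add_add_sub_cancel, two_smul]
  rw [← Submodule.smul_mem_iff_of_isUnit _ h2, ← hv]
  exact add_mem (Submodule.mem_iSup_of_mem _ hplus) (Submodule.mem_iSup_of_mem _ hminus)

theorem isSelfAdjoint_of_sq_eq_one {B : LinearMap.BilinForm R M} (hf : f ^ 2 = 1)
    (hB : ∀ v w, B (f v) (f w) = B v w) : B.IsSelfAdjoint f := fun v w ↦ by
  have hff : f (f w) = w := by simpa [sq] using LinearMap.congr_fun hf w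
  rw [← hB v (f w), hff]

end Involution

theorem exists_monoidHom_of_jointEigenspace_ne_bot {G R M : Type*} [Group G] [CommRing R]
    [IsDomain R] [AddCommGroup M] [Module R M] [IsTorsionFree R M] {ρ : Representation R G M}
    {χ : G → R} (h : jointEigenspace ρ χ ≠ ⊥) : ∃ lam : G →* Rˣ, ∀ g, (lam g : R) = χ g := by
  obtain ⟨v, hv, hv0⟩ := (Submodule.ne_bot_iff _).1 h
  rw [mem_jointEigenspace_iff] at hv
  have hinj : Function.Injective fun c : R ↦ c • v := smul_left_injective R hv0
  let c : G →* R :=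
    { toFun := χ
      map_one' := hinj <| by simp only [← hv, map_one, End.one_apply, one_smul]
      map_mul' := fun g k ↦ hinj <| by
        simp only [← hv (g * k), map_mul, End.mul_apply, hv k, map_smul, hv g, smul_smul,
          mul_comm (χ g)] }
  exact ⟨c.toHomUnits, fun _ ↦ rfl⟩

theorem invariant_isotropic_subspace_dim_le_one_general {N K U : Type*} [Group N] [Field K]
    [NeZero (2 : K)] [AddCommGroup U] [Module K U] [FiniteDimensional K U]
    (hN2 : ∀ g : N, g ^ 2 = 1) (ρ : Representation K N U) {B : LinearMap.BilinForm K U}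
    (hB : B.SeparatingLeft) (hBinv : ∀ (g : N) (v w : U), B (ρ g v) (ρ g w) = B v w)
    (heig : ∀ lam : N →* Kˣ, lam ≠ 1 →
      finrank K ↥(⨅ g : N, End.eigenspace (ρ g) (lam g : K)) ≤ 1)
    {L : Submodule K U} (hLinv : ∀ (g : N), ∀ v ∈ L, ρ g v ∈ L) (hLiso : L ≤ B.orthogonal L) :
    2 * finrank K L ≤ finrank K ↥(⨅ g : N, End.eigenspace (ρ g) 1) := by
  have hsq (g : N) : ρ g ^ 2 = 1 := by rw [← map_pow, hN2, map_one]
  have hcomm (g h : N) : Commute (ρ g) (ρ h) :=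
    (Commute.of_orderOf_dvd_two (fun g ↦ orderOf_dvd_of_pow_eq_one (hN2 g)) g h).map ρ
  have hdiag (g : N) : ⨆ μ, End.eigenspace (ρ g) μ = ⊤ :=
    iSup_eigenspace_eq_top_of_sq_eq_one two_ne_zero.isUnit (hsq g)
  have hadj (g : N) : B.IsSelfAdjoint (ρ g) := isSelfAdjoint_of_sq_eq_one (hsq g) (hBinv g)
  have hdim (ψ : N → K) (hψ : ψ ≠ fun _ ↦ 1) : finrank K (jointEigenspace ρ ψ) ≤ 1 := by
    by_cases hbot : jointEigenspace ρ ψ = ⊥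
    · rw [hbot, finrank_bot]; exact zero_le_one
    · obtain ⟨lam, hlam⟩ := exists_monoidHom_of_jointEigenspace_ne_bot hbot
      obtain rfl : (fun g ↦ (lam g : K)) = ψ := funext hlam
      exact heig lam (by rintro rfl; exact hψ rfl)
  have hfixed : L ≤ jointEigenspace ρ fun _ ↦ 1 :=
    le_jointEigenspace_of_finrank_le_one hB hadj hLiso hcomm hdiag hLinv hdim
  have hhalf := two_mul_finrank_inf_jointEigenspace_le hB hadj hLiso
    (iSup_jointEigenspace_eq_top hcomm hdiag) fun _ ↦ 1
  rwa [inf_eq_left.2 hfixed] at hhalf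

/-- Let N be a finite elementary abelian 2-group acting on a finite-dimensional complex
vector space U preserving a nondegenerate symmetric bilinear form B. If every nontrivial
character eigenspace has dimension at most 1 and the fixed subspace has dimension at most 2,
then every N-invariant totally isotropic subspace of U has dimension at most 1. -/
theorem invariant_isotropic_subspace_dim_le_one
    {N : Type*} [Group N] [Finite N] (hN2 : ∀ g : N, g ^ 2 = 1)
    {U : Type*} [AddCommGroup U] [Module ℂ U] [FiniteDimensional ℂ U]
    (ρ : Representation ℂ N U) (B : LinearMap.BilinForm ℂ U)
    (hBsymm : ∀ v w : U, B v w = B w v)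
    (hBnd : ∀ v : U, (∀ w : U, B v w = 0) → v = 0)
    (hBinv : ∀ (g : N) (v w : U), B (ρ g v) (ρ g w) = B v w)
    (heig : ∀ lam : N →* ℂˣ, lam ≠ 1 →
      Module.finrank ℂ ↥(⨅ g : N, Module.End.eigenspace (ρ g) (lam g : ℂ)) ≤ 1)
    (hfix : Module.finrank ℂ ↥(⨅ g : N, Module.End.eigenspace (ρ g) 1) ≤ 2)
    (L : Submodule ℂ U)
    (hLinv : ∀ (g : N), ∀ v ∈ L, ρ g v ∈ L)
    (hLiso : ∀ v ∈ L, ∀ w ∈ L, B v w = 0) :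
    Module.finrank ℂ L ≤ 1 := by
  have hhalf := invariant_isotropic_subspace_dim_le_one_general hN2 ρ hBnd hBinv heig hLinv
    fun w hw v hv ↦ hLiso v hv w hw
  lia
end

section
/- Let U be an irreducible complex representation of SL(2, F_8) of dimension 9, equipped with a nondegenerate SL(2, F_8)-invariant symmetric bilinear form B, and let N be the subgroup of unipotent upper-triangular matrices with rows (1, a) and (0, 1) for a ∈ F_8. Then every N-invariant subspace L of U on which B vanishes identically has dimension at most 1. In particular, there is no 4-dimensional totally isotropic N-invariant subspace of U. -/
open Matrix

/-!
Let `N` be the group of upper unipotent matrices in `SL₂(F)`, where `F` has `q` elements and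
characteristic two. The weights of `N` in a representation `V` take the values `±1`, so an invariant
form makes distinct weight spaces orthogonal and, when nondegenerate on `V`, is nondegenerate on
each weight space. Consequently an `N`-invariant totally isotropic subspace, which is the direct sum
of its intersections with the weight spaces, fills at most half of each of them. Every element of
`F` is a square, so the diagonal torus permutes the `q - 1` nontrivial weights transitively and
their weight spaces all have the same dimension. That dimension is positive unless `SL₂(F)` acts
trivially, because the conjugates of `N` generate `SL₂(F)`; if moreover `dim V < 2 (q - 1)` it is
one. Then the isotropic subspace lies in the space of `N`-invariants, of dimension
`dim V - (q - 1)`, and has at most half that dimension. For `q = 8` and `dim V = 9` this is one.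
-/

section LinearAlgebra

open Module

variable {k V : Type*} [Field k] [AddCommGroup V] [Module k V] [FiniteDimensional k V]

lemma finrank_iSup_of_iSupIndep {ι : Type*} [Fintype ι] {p : ι → Submodule k V}
    (hp : iSupIndep p) : finrank k (⨆ i, p i : Submodule k V) = ∑ i, finrank k (p i) := by
  classical
  rw [Submodule.iSup_eq_range_dfinsupp_lsum,
    LinearMap.finrank_range_of_inj hp.dfinsupp_lsum_injective]
  exact finrank_directSum (R := k) fun i ↦ ↥(p i)

lemma two_mul_finrank_le_of_isotropic {B : LinearMap.BilinForm k V} (hB : B.SeparatingLeft)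
    {L : Submodule k V} (hL : ∀ v ∈ L, ∀ w ∈ L, B v w = 0) :
    2 * finrank k L ≤ finrank k V := by
  have hB_inj : Function.Injective B :=
    LinearMap.ker_eq_bot.mp (LinearMap.separatingLeft_iff_ker_eq_bot.mp hB)
  have hL_ann : L.map B ≤ L.dualAnnihilator := by
    rintro _ ⟨v, hv, rfl⟩
    exact (Submodule.mem_dualAnnihilator _).mpr (hL v hv)
  have h_le := Submodule.finrank_mono hL_ann
  rw [(Submodule.equivMapOfInjective B hB_inj L).symm.finrank_eq] at h_le
  have h_add := Subspace.finrank_add_finrank_dualAnnihilator_eq L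
  lia

end LinearAlgebra

section WeightSpace

open Module

variable {k A V : Type*} [Field k] [AddCommGroup A] [AddCommGroup V] [Module k V]

/-- The `χ`-weight space of a linear action `T` of an additive group `A`: the vectors on which every
`a : A` acts as the scalar `χ a`. The action is encoded as an additive character with values in
`Module.End k V`. -/
def weightSpace (T : AddChar A (End k V)) (χ : AddChar A k) : Submodule k V :=
  ⨅ a, (T a).eigenspace (χ a)

lemma mem_weightSpace {T : AddChar A (End k V)} {χ : AddChar A k} {v : V} :
    v ∈ weightSpace T χ ↔ ∀ a, T a v = χ a • v := by
  simp [weightSpace]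

lemma iSupIndep_weightSpace (T : AddChar A (End k V)) : iSupIndep (weightSpace T) := by
  have h_commute (a b : A) : Commute (T a) (T b) := by
    rw [commute_iff_eq, ← T.map_add_eq_mul, ← T.map_add_eq_mul, add_comm]
  have h_fun : iSupIndep fun χ : A → k ↦ ⨅ a, (T a).maxGenEigenspace (χ a) :=
    End.independent_iInf_maxGenEigenspace_of_forall_mapsTo (fun a ↦ T a)
      fun a b ↦ End.mapsTo_maxGenEigenspace_of_comm (h_commute b a)
  have h_char : iSupIndep fun χ : AddChar A k ↦ ⨅ a, (T a).maxGenEigenspace (χ a) :=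
    h_fun.comp DFunLike.coe_injective
  exact h_char.mono fun χ ↦ iInf_mono fun a ↦ End.eigenspace_le_maxGenEigenspace

variable [Fintype A]

/-- The average of `χ(a)⁻¹ T(a)` over the finite group `A`, which is the projection onto the
`χ`-weight space along the other weight spaces when `|A|` is invertible in `k`. If `|A| = 0` in `k`,
it is zero. -/
noncomputable def weightProj (T : AddChar A (End k V)) (χ : AddChar A k) : End k V :=
  (Fintype.card A : k)⁻¹ • ∑ a, χ (-a) • T a

lemma weightProj_apply (T : AddChar A (End k V)) (χ : AddChar A k) (v : V) :
    weightProj T χ v = (Fintype.card A : k)⁻¹ • ∑ a, χ (-a) • T a v := by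
  simp [weightProj]

lemma weightProj_mem_weightSpace (T : AddChar A (End k V)) (χ : AddChar A k) (v : V) :
    weightProj T χ v ∈ weightSpace T χ := by
  refine mem_weightSpace.mpr fun a ↦ ?_
  have h_sum : ∑ b, T a (χ (-b) • T b v) = ∑ b, χ a • χ (-b) • T b v := by
    refine Fintype.sum_equiv (Equiv.addLeft a) _ _ fun b ↦ ?_
    have hχ : χ (-b) = χ a * χ (-(a + b)) := by
      rw [← AddChar.map_add_eq_mul, neg_add, add_neg_cancel_left]
    rw [Equiv.coe_addLeft, T.map_add_eq_mul, End.mul_apply, map_smul, hχ, mul_smul]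
  rw [weightProj_apply, map_smul, map_sum, h_sum, ← Finset.smul_sum, smul_comm]

lemma weightProj_mem_of_invariant {T : AddChar A (End k V)} {L : Submodule k V}
    (hL : ∀ a, ∀ v ∈ L, T a v ∈ L) (χ : AddChar A k) {v : V} (hv : v ∈ L) :
    weightProj T χ v ∈ L := by
  rw [weightProj_apply]
  exact L.smul_mem _ (L.sum_mem fun a _ ↦ L.smul_mem _ (hL a v hv))

section BilinForm

variable {T : AddChar A (End k V)} {χ : AddChar A k} {B : LinearMap.BilinForm k V}

lemma bilin_weightProj_right (hA : (Fintype.card A : k) ≠ 0)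
    (hTB : ∀ a v w, B (T a v) (T a w) = B v w) {v : V} (hv : v ∈ weightSpace T χ⁻¹) (w : V) :
    B v (weightProj T χ w) = B v w := by
  have h_term (a : A) : B v (χ (-a) • T a w) = B v w := by
    rw [← hTB a v w, mem_weightSpace.mp hv a, AddChar.inv_apply, map_smul, map_smul,
      LinearMap.smul_apply]
  simp [weightProj_apply, h_term, hA]

lemma separatingLeft_restrict_weightSpace (hA : (Fintype.card A : k) ≠ 0)
    (hB : B.SeparatingLeft) (hTB : ∀ a v w, B (T a v) (T a w) = B v w) (hχ : χ⁻¹ = χ) :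
    (B.restrict (weightSpace T χ)).SeparatingLeft := by
  intro v hv
  refine Subtype.ext (hB v fun w ↦ ?_)
  rw [← bilin_weightProj_right hA hTB (by rw [hχ]; exact v.2) w]
  exact hv ⟨_, weightProj_mem_weightSpace T χ w⟩

lemma two_mul_finrank_inf_weightSpace_le [FiniteDimensional k V]
    (hA : (Fintype.card A : k) ≠ 0) (hB : B.SeparatingLeft)
    (hTB : ∀ a v w, B (T a v) (T a w) = B v w) (hχ : χ⁻¹ = χ) {L : Submodule k V}
    (hL : ∀ v ∈ L, ∀ w ∈ L, B v w = 0) :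
    2 * finrank k (L ⊓ weightSpace T χ : Submodule k V) ≤ finrank k (weightSpace T χ) := by
  rw [inf_comm, ← Submodule.map_comap_subtype, Submodule.finrank_map_subtype_eq]
  exact two_mul_finrank_le_of_isotropic (separatingLeft_restrict_weightSpace hA hB hTB hχ)
    fun v hv w hw ↦ hL v hv w hw

end BilinForm

end WeightSpace

section FiniteField

open Module

variable {k F V : Type*} [Field k] [Field F] [Fintype F] [AddCommGroup V] [Module k V]
  {ψ : AddChar F k}

lemma sum_weightProj_mulShift (hF : (Fintype.card F : k) ≠ 0) (hψ : ψ.IsPrimitive)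
    (T : AddChar F (End k V)) : ∑ b, weightProj T (ψ.mulShift b) = 1 := by
  classical
  simp only [weightProj, AddChar.mulShift_apply]
  rw [← Finset.smul_sum, Finset.sum_comm]
  simp only [← Finset.sum_smul, AddChar.sum_mulShift _ hψ, neg_eq_zero]
  simp [ite_smul, hF]

lemma finrank_eq_sum_finrank_inf_weightSpace [FiniteDimensional k V]
    (hF : (Fintype.card F : k) ≠ 0) (hψ : ψ.IsPrimitive) (T : AddChar F (End k V))
    {L : Submodule k V} (hL : ∀ a, ∀ v ∈ L, T a v ∈ L) :
    finrank k L = ∑ b, finrank k (L ⊓ weightSpace T (ψ.mulShift b) : Submodule k V) := by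
  have h_iSup : ⨆ b, L ⊓ weightSpace T (ψ.mulShift b) = L := by
    refine le_antisymm (iSup_le fun b ↦ inf_le_left) fun v hv ↦ ?_
    rw [← End.one_apply (R := k) v, ← sum_weightProj_mulShift hF hψ T, LinearMap.sum_apply]
    exact Submodule.sum_mem_iSup fun b ↦
      ⟨weightProj_mem_of_invariant hL _ hv, weightProj_mem_weightSpace T _ v⟩
  have h_indep : iSupIndep fun b ↦ L ⊓ weightSpace T (ψ.mulShift b) :=
    ((iSupIndep_weightSpace T).comp (AddChar.to_mulShift_inj_of_isPrimitive hψ)).mono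
      fun b ↦ inf_le_right
  rw [← finrank_iSup_of_iSupIndep h_indep, h_iSup]

lemma finrank_eq_sum_finrank_weightSpace [FiniteDimensional k V]
    (hF : (Fintype.card F : k) ≠ 0) (hψ : ψ.IsPrimitive) (T : AddChar F (End k V)) :
    finrank k V = ∑ b, finrank k (weightSpace T (ψ.mulShift b)) := by
  rw [← finrank_top k V,
    finrank_eq_sum_finrank_inf_weightSpace hF hψ T fun _ _ _ ↦ Submodule.mem_top]
  exact Finset.sum_congr rfl fun b _ ↦ by rw [top_inf_eq]

end FiniteField

section CharTwo

variable {k F : Type*} [Field k] [Field F] [CharP F 2]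

lemma addChar_inv_eq_self_of_charTwo (χ : AddChar F k) : χ⁻¹ = χ := by
  ext a
  rw [AddChar.inv_apply, CharTwo.neg_eq]

lemma card_cast_ne_zero_of_charTwo [Fintype F] (hk : (2 : k) ≠ 0) : (Fintype.card F : k) ≠ 0 := by
  obtain ⟨n, -, hn⟩ := FiniteField.card F 2
  rw [hn]
  exact_mod_cast pow_ne_zero n hk

lemma exists_isPrimitive_addChar_of_charTwo [Finite F] (hk : (2 : k) ≠ 0) :
    ∃ ψ : AddChar F k, ψ.IsPrimitive := by
  let := ZMod.algebra F 2
  obtain ⟨a, ha⟩ := Algebra.trace_surjective (ZMod 2) F 1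
  let sign : AddChar (ZMod 2) k := AddChar.zmodChar 2 (ζ := -1) (by norm_num)
  refine ⟨sign.compAddMonoidHom (Algebra.trace (ZMod 2) F).toAddMonoidHom,
    AddChar.IsPrimitive.of_ne_one (AddChar.ne_one_iff.mpr ⟨a, ?_⟩)⟩
  have h_neg_one : (-1 : k) ≠ 1 := fun h ↦ hk (by linear_combination -h)
  simpa [sign, ha, AddChar.zmodChar_apply, ZMod.val_one''] using h_neg_one

end CharTwo

section SpecialLinearGroup

open Matrix.SpecialLinearGroup
open scoped MatrixGroups

variable {F : Type*} [Field F]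

/-- The upper unipotent matrices in `SL₂(F)`, parametrized by the additive group of `F`. -/
def upperUnipotent : AddChar F SL(2, F) where
  toFun := SpecialLinearGroup.transvection zero_ne_one
  map_zero_eq_one' := transvection_coeff_zero _
  map_add_eq_mul' := transvection_add _

lemma coe_upperUnipotent (a : F) :
    (upperUnipotent a : Matrix (Fin 2) (Fin 2) F) = !![1, a; 0, 1] := by
  ext i j
  fin_cases i <;> fin_cases j <;> simp [upperUnipotent, transvection_coe]

lemma diag2_mul_upperUnipotent {c : F} (hc : c ≠ 0) (a : F) :
    diag2 c hc * upperUnipotent a = upperUnipotent (c ^ 2 * a) * diag2 c hc := by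
  apply Subtype.ext
  simp only [coe_mul, coe_upperUnipotent, diag2_coe', Matrix.mul_fin_two]
  field_simp
  simp

lemma eq_top_of_upperUnipotent_mem {K : Subgroup SL(2, F)} [hK : K.Normal]
    (h : ∀ a, upperUnipotent a ∈ K) : K = ⊤ := by
  let w : SL(2, F) := ⟨!![0, 1; -1, 0], by simp⟩
  have h_conj (a : F) :
      w * upperUnipotent (-a) * w⁻¹ = SpecialLinearGroup.transvection one_ne_zero a := by
    refine mul_inv_eq_iff_eq_mul.mpr (Subtype.ext ?_)
    rw [coe_mul, coe_mul, coe_upperUnipotent, transvection_coe]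
    ext i j
    fin_cases i <;> fin_cases j <;> simp [w, Matrix.mul_apply, Fin.sum_univ_two]
  refine eq_top_iff.mpr fun g _ ↦ SL2.transvection_induction (· ∈ K) ?_ (fun _ _ ↦ K.mul_mem) g
  intro i j hij a
  fin_cases i <;> fin_cases j
  · exact absurd rfl hij
  · exact h a
  · exact h_conj a ▸ hK.conj_mem _ (h (-a)) w
  · exact absurd rfl hij

end SpecialLinearGroup

section Representation

open Module Matrix.SpecialLinearGroup
open scoped MatrixGroups

variable {k F V : Type*} [Field k] [Field F] [AddCommGroup V] [Module k V]

/-- The weight space of the upper unipotent subgroup of `SL₂(F)` for the character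
`a ↦ ψ (b * a)`. -/
def unipotentWeightSpace (ρ : Representation k SL(2, F) V) (ψ : AddChar F k) (b : F) :
    Submodule k V :=
  weightSpace (ρ.compAddChar upperUnipotent) (ψ.mulShift b)

lemma mem_unipotentWeightSpace {ρ : Representation k SL(2, F) V} {ψ : AddChar F k} {b : F} {v : V} :
    v ∈ unipotentWeightSpace ρ ψ b ↔ ∀ a, ρ (upperUnipotent a) v = ψ (b * a) • v :=
  mem_weightSpace

variable [FiniteDimensional k V]

lemma finrank_unipotentWeightSpace_sq_mul_le (ρ : Representation k SL(2, F) V) (ψ : AddChar F k)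
    {c : F} (hc : c ≠ 0) (b : F) :
    finrank k (unipotentWeightSpace ρ ψ (c ^ 2 * b)) ≤ finrank k (unipotentWeightSpace ρ ψ b) := by
  have h_map : (unipotentWeightSpace ρ ψ (c ^ 2 * b)).map (ρ (diag2 c hc)) ≤
      unipotentWeightSpace ρ ψ b := by
    rintro _ ⟨v, hv, rfl⟩
    refine mem_unipotentWeightSpace.mpr fun a ↦ ?_
    obtain ⟨a, rfl⟩ : ∃ a', a = c ^ 2 * a' := ⟨a / c ^ 2, by field_simp⟩
    rw [← End.mul_apply, ← map_mul, ← diag2_mul_upperUnipotent, map_mul, End.mul_apply,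
      mem_unipotentWeightSpace.mp hv, map_smul]
    congr 2
    ring
  have h_inj : Function.Injective (ρ (diag2 c hc)) := (ρ.apply_bijective _).injective
  rw [(Submodule.equivMapOfInjective _ h_inj _).finrank_eq]
  exact Submodule.finrank_mono h_map

variable [Finite F] [CharP F 2]

lemma finrank_unipotentWeightSpace_le (ρ : Representation k SL(2, F) V) (ψ : AddChar F k)
    {b b' : F} (hb : b ≠ 0) (hb' : b' ≠ 0) :
    finrank k (unipotentWeightSpace ρ ψ b) ≤ finrank k (unipotentWeightSpace ρ ψ b') := by
  have := Fintype.ofFinite F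
  obtain ⟨c, hc⟩ := FiniteField.isSquare_of_char_two (ringChar.eq F 2) (b / b')
  obtain rfl : b = c ^ 2 * b' := by rw [sq, ← hc, div_mul_cancel₀ b hb']
  have hc0 : c ≠ 0 := by
    rintro rfl
    simp at hb
  exact finrank_unipotentWeightSpace_sq_mul_le ρ ψ hc0 b'

lemma finrank_unipotentWeightSpace_eq (ρ : Representation k SL(2, F) V) (ψ : AddChar F k)
    {b b' : F} (hb : b ≠ 0) (hb' : b' ≠ 0) :
    finrank k (unipotentWeightSpace ρ ψ b) = finrank k (unipotentWeightSpace ρ ψ b') :=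
  le_antisymm (finrank_unipotentWeightSpace_le ρ ψ hb hb')
    (finrank_unipotentWeightSpace_le ρ ψ hb' hb)

variable {ρ : Representation k SL(2, F) V} {ψ : AddChar F k}

lemma finrank_eq_finrank_unipotentWeightSpace_zero_add (hk : (2 : k) ≠ 0) (hψ : ψ.IsPrimitive) :
    finrank k V = finrank k (unipotentWeightSpace ρ ψ 0) +
      (Nat.card F - 1) * finrank k (unipotentWeightSpace ρ ψ 1) := by
  classical
  have := Fintype.ofFinite F
  calc finrank k V
    _ = ∑ b, finrank k (unipotentWeightSpace ρ ψ b) :=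
      finrank_eq_sum_finrank_weightSpace (card_cast_ne_zero_of_charTwo hk) hψ _
    _ = finrank k (unipotentWeightSpace ρ ψ 0) +
        ∑ b ∈ Finset.univ.erase 0, finrank k (unipotentWeightSpace ρ ψ b) :=
      (Finset.add_sum_erase _ _ (Finset.mem_univ 0)).symm
    _ = _ := by
      rw [Finset.sum_congr rfl fun b hb ↦
          finrank_unipotentWeightSpace_eq ρ ψ (Finset.ne_of_mem_erase hb) one_ne_zero,
        Finset.sum_const, Finset.card_erase_of_mem (Finset.mem_univ 0), Finset.card_univ,
        smul_eq_mul, Nat.card_eq_fintype_card]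

lemma unipotentWeightSpace_one_ne_bot (hk : (2 : k) ≠ 0) (hψ : ψ.IsPrimitive) (hρ : ρ ≠ 1) :
    unipotentWeightSpace ρ ψ 1 ≠ ⊥ := by
  intro h_bot
  have h_top : unipotentWeightSpace ρ ψ 0 = ⊤ := by
    apply Submodule.eq_top_of_finrank_eq
    rw [finrank_eq_finrank_unipotentWeightSpace_zero_add (ρ := ρ) hk hψ, h_bot, finrank_bot,
      mul_zero, add_zero]
  have h_ker (a : F) : upperUnipotent a ∈ ρ.ker := by
    refine MonoidHom.mem_ker.mpr (LinearMap.ext fun v ↦ ?_)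
    have hv : v ∈ unipotentWeightSpace ρ ψ 0 := h_top ▸ Submodule.mem_top
    simpa using mem_unipotentWeightSpace.mp hv a
  exact hρ ((MonoidHom.ker_eq_top_iff).mp (eq_top_of_upperUnipotent_mem h_ker))

lemma finrank_unipotentWeightSpace_one (hk : (2 : k) ≠ 0) (hψ : ψ.IsPrimitive) (hρ : ρ ≠ 1)
    (hV : finrank k V < 2 * (Nat.card F - 1)) :
    finrank k (unipotentWeightSpace ρ ψ 1) = 1 := by
  have h_pos : 0 < finrank k (unipotentWeightSpace ρ ψ 1) :=
    Nat.pos_of_ne_zero fun h ↦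
      unipotentWeightSpace_one_ne_bot hk hψ hρ (Submodule.finrank_eq_zero.mp h)
  have h_lt : finrank k (unipotentWeightSpace ρ ψ 1) < 2 := by
    refine lt_of_mul_lt_mul_left' (a := Nat.card F - 1) ?_
    have := finrank_eq_finrank_unipotentWeightSpace_zero_add (ρ := ρ) hk hψ
    lia
  lia

lemma finrank_eq_finrank_inf_unipotentWeightSpace_zero (hk : (2 : k) ≠ 0) (hψ : ψ.IsPrimitive)
    (hW : finrank k (unipotentWeightSpace ρ ψ 1) = 1) {B : LinearMap.BilinForm k V}
    (hB : B.SeparatingLeft) (hρB : ∀ g v w, B (ρ g v) (ρ g w) = B v w) {L : Submodule k V}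
    (hL : ∀ a, ∀ v ∈ L, ρ (upperUnipotent a) v ∈ L) (hL_iso : ∀ v ∈ L, ∀ w ∈ L, B v w = 0) :
    finrank k L = finrank k (L ⊓ unipotentWeightSpace ρ ψ 0 : Submodule k V) := by
  have := Fintype.ofFinite F
  have hF := card_cast_ne_zero_of_charTwo (F := F) hk
  calc finrank k L
    _ = ∑ b, finrank k (L ⊓ unipotentWeightSpace ρ ψ b : Submodule k V) :=
      finrank_eq_sum_finrank_inf_weightSpace hF hψ _ hL
    _ = finrank k (L ⊓ unipotentWeightSpace ρ ψ 0 : Submodule k V) := by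
      refine Fintype.sum_eq_single 0 fun b hb ↦ ?_
      have h_half : 2 * finrank k (L ⊓ unipotentWeightSpace ρ ψ b : Submodule k V) ≤
          finrank k (unipotentWeightSpace ρ ψ b) :=
        two_mul_finrank_inf_weightSpace_le hF hB (fun a ↦ hρB (upperUnipotent a))
          (addChar_inv_eq_self_of_charTwo _) hL_iso
      rw [finrank_unipotentWeightSpace_eq ρ ψ hb one_ne_zero, hW] at h_half
      lia

end Representation

section FDRep

open CategoryTheory Module

lemma rho_ne_one_of_simple {k G : Type*} [Field k] [IsAlgClosed k] [Group G]
    (U : FDRep k G) [Simple U] (hU : 1 < finrank k U) : U.ρ ≠ 1 := by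
  intro h_triv
  let toHom : End k U →ₗ[k] (U ⟶ U) :=
    { toFun f := ⟨InducedCategory.homMk (ModuleCat.ofHom f), fun g ↦ by
        ext : 2
        simp [h_triv]⟩
      map_add' _ _ := rfl
      map_smul' _ _ := rfl }
  have h_inj : Function.Injective toHom := fun f f' h ↦
    congrArg (fun φ : U ⟶ U ↦ φ.hom.hom.hom) h
  have h_le : finrank k U * finrank k U ≤ 1 := calc
    finrank k U * finrank k U = finrank k (End k U) := (finrank_linearMap k k U U).symm
    _ ≤ finrank k (U ⟶ U) := LinearMap.finrank_le_finrank_of_injective h_inj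
    _ = 1 := by rw [FDRep.finrank_hom_simple_simple, if_pos ⟨Iso.refl U⟩]
  exact absurd h_le (Nat.one_lt_mul_iff.mpr ⟨by lia, by lia, Or.inl hU⟩).not_ge

end FDRep

section General

open Module
open scoped MatrixGroups

theorem no_large_isotropic_unipotent_invariant_subspace_general {k F V : Type*} [Field k]
    (hk : (2 : k) ≠ 0) [Field F] [Finite F] [CharP F 2] [AddCommGroup V] [Module k V]
    [FiniteDimensional k V] (ρ : Representation k SL(2, F) V) (hρ : ρ ≠ 1)
    (hV : finrank k V < 2 * (Nat.card F - 1)) (B : LinearMap.BilinForm k V)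
    (hB : B.SeparatingLeft) (hρB : ∀ g v w, B (ρ g v) (ρ g w) = B v w) (L : Submodule k V)
    (hL : ∀ a, ∀ v ∈ L, ρ (upperUnipotent a) v ∈ L) (hL_iso : ∀ v ∈ L, ∀ w ∈ L, B v w = 0) :
    2 * finrank k L + (Nat.card F - 1) ≤ finrank k V := by
  have := Fintype.ofFinite F
  obtain ⟨ψ, hψ⟩ := exists_isPrimitive_addChar_of_charTwo (F := F) hk
  have hW := finrank_unipotentWeightSpace_one hk hψ hρ hV
  have h_half : 2 * finrank k (L ⊓ unipotentWeightSpace ρ ψ 0 : Submodule k V) ≤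
      finrank k (unipotentWeightSpace ρ ψ 0) :=
    two_mul_finrank_inf_weightSpace_le (card_cast_ne_zero_of_charTwo hk) hB
      (fun a ↦ hρB (upperUnipotent a)) (addChar_inv_eq_self_of_charTwo _) hL_iso
  rw [finrank_eq_finrank_inf_unipotentWeightSpace_zero hk hψ hW hB hρB hL hL_iso,
    finrank_eq_finrank_unipotentWeightSpace_zero_add (ρ := ρ) hk hψ, hW, mul_one]
  exact Nat.add_le_add_right h_half _

end General

/-- Let U be an irreducible 9-dimensional complex representation of SL(2, F_8) with a
nondegenerate invariant symmetric bilinear form B, and N the subgroup of unipotent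
upper-triangular matrices. Then every N-invariant totally isotropic subspace of U has
dimension at most 1; in particular there is no 4-dimensional totally isotropic
N-invariant subspace. -/
theorem no_large_isotropic_unipotent_invariant_subspace
    (U : FDRep ℂ (Matrix.SpecialLinearGroup (Fin 2) (GaloisField 2 3)))
    [CategoryTheory.Simple U]
    (hdim : Module.finrank ℂ U = 9)
    (B : LinearMap.BilinForm ℂ U)
    (hBsymm : ∀ v w : U, B v w = B w v)
    (hBnd : ∀ v : U, (∀ w : U, B v w = 0) → v = 0)
    (hBinv : ∀ (g : Matrix.SpecialLinearGroup (Fin 2) (GaloisField 2 3)) (v w : U),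
      B (U.ρ g v) (U.ρ g w) = B v w)
    (N : Subgroup (Matrix.SpecialLinearGroup (Fin 2) (GaloisField 2 3)))
    (hN : ∀ g : Matrix.SpecialLinearGroup (Fin 2) (GaloisField 2 3),
      g ∈ N ↔ ∃ a : GaloisField 2 3,
        (g : Matrix (Fin 2) (Fin 2) (GaloisField 2 3)) = !![1, a; 0, 1]) :
    (∀ L : Submodule ℂ U,
      (∀ n ∈ N, ∀ v ∈ L, U.ρ n v ∈ L) →
      (∀ v ∈ L, ∀ w ∈ L, B v w = 0) →
      Module.finrank ℂ L ≤ 1) ∧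
    ¬ ∃ L : Submodule ℂ U,
        Module.finrank ℂ L = 4 ∧
        (∀ n ∈ N, ∀ v ∈ L, U.ρ n v ∈ L) ∧
        (∀ v ∈ L, ∀ w ∈ L, B v w = 0) := by
  have hN_mem (a : GaloisField 2 3) : upperUnipotent a ∈ N :=
    (hN _).mpr ⟨a, coe_upperUnipotent a⟩
  have h_bound (L : Submodule ℂ U) (hL : ∀ n ∈ N, ∀ v ∈ L, U.ρ n v ∈ L)
      (hL_iso : ∀ v ∈ L, ∀ w ∈ L, B v w = 0) : Module.finrank ℂ L ≤ 1 := by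
    have hF : Nat.card (GaloisField 2 3) = 8 := GaloisField.card 2 3 (by norm_num)
    have := no_large_isotropic_unipotent_invariant_subspace_general two_ne_zero U.ρ
      (rho_ne_one_of_simple U (by lia)) (by lia) B hBnd hBinv L (fun a ↦ hL _ (hN_mem a)) hL_iso
    lia
  refine ⟨h_bound, ?_⟩
  rintro ⟨L, hL_four, hL, hL_iso⟩
  have := h_bound L hL hL_iso
  lia
end

section
/- Let U be an irreducible complex representation of SL(2, F_8) of dimension 9. Then there exists a nondegenerate SL(2, F_8)-invariant symmetric bilinear form on U, and any two nonzero invariant bilinear forms on U are proportional (the invariant form is unique up to a scalar). -/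
/-!
An element of `SL(2, F)` of trace zero is an involution in characteristic two, and for every `g`
there is some `h` with `tr h = tr (h * g) = 0`; then `h` conjugates `g` to `g⁻¹`. Hence characters
are invariant under `g ↦ g⁻¹`, every irreducible representation is self-dual, and it carries a
nonzero invariant form, which is nondegenerate and unique up to scalars by Schur's lemma. In
particular `B.flip = c • B`. Flipping twice gives `c ^ 2 = 1` and taking determinants gives
`c ^ n = 1` in dimension `n`, so `c = 1` when `n` is odd.
-/

open Module Representation
open LinearMap (BilinForm)

section SpecialLinearGroup

open Matrix hiding mul_inv_rev
open scoped MatrixGroups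

theorem inv_eq_self_of_trace_eq_zero {R : Type*} [CommRing R] [CharP R 2] {g : SL(2, R)}
    (hg : trace (g : Matrix (Fin 2) (Fin 2) R) = 0) : g⁻¹ = g := by
  have hdiag : g 0 0 = g 1 1 := by
    rwa [trace_fin_two, CharTwo.add_eq_zero] at hg
  ext i j
  fin_cases i <;> fin_cases j <;>
    simp [adjugate_fin_two, hdiag, CharTwo.neg_eq]

theorem exists_trace_eq_zero_and_trace_mul_eq_zero {F : Type*} [Field F] [CharP F 2]
    (g : SL(2, F)) : ∃ h : SL(2, F), trace (h : Matrix (Fin 2) (Fin 2) F) = 0 ∧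
      trace ((h * g : SL(2, F)) : Matrix (Fin 2) (Fin 2) F) = 0 := by
  suffices ∃ x y z : F, x * x - y * z = 1 ∧ x * (g 0 0 + g 1 1) + y * g 1 0 + z * g 0 1 = 0 by
    obtain ⟨x, y, z, hdet, htr⟩ := this
    let h : SL(2, F) := ⟨!![x, y; z, x], by rwa [det_fin_two_of]⟩
    refine ⟨h, by simp [h, trace_fin_two, CharTwo.add_self_eq_zero], ?_⟩
    rw [Matrix.SpecialLinearGroup.coe_mul, trace_fin_two, mul_apply, mul_apply]
    simp only [h, Fin.sum_univ_two, of_apply, cons_val]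
    linear_combination htr
  by_cases hc : g 1 0 = 0
  · by_cases hb : g 0 1 = 0
    · exact ⟨0, 1, 1, by simp [CharTwo.neg_eq], by simp [hb, hc]⟩
    · exact ⟨1, 0, (g 0 0 + g 1 1) / g 0 1, by simp, by simp [hb, CharTwo.add_self_eq_zero]⟩
  · exact ⟨1, (g 0 0 + g 1 1) / g 1 0, 0, by simp, by simp [hc, CharTwo.add_self_eq_zero]⟩

theorem isConj_inv_of_charTwo {F : Type*} [Field F] [CharP F 2] (g : SL(2, F)) :
    IsConj g g⁻¹ := by
  obtain ⟨h, hh, hhg⟩ := exists_trace_eq_zero_and_trace_mul_eq_zero g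
  refine isConj_iff.2 ⟨h, ?_⟩
  calc h * g * h⁻¹ = (h * g)⁻¹ * h⁻¹ := by rw [inv_eq_self_of_trace_eq_zero hhg]
    _ = g⁻¹ * (h⁻¹ * h⁻¹) := by rw [mul_inv_rev, mul_assoc]
    _ = g⁻¹ := by nth_rw 1 [inv_eq_self_of_trace_eq_zero hh, mul_inv_cancel, mul_one]

end SpecialLinearGroup

theorem eq_one_of_flip_eq_smul {k V : Type*} [Field k] [AddCommGroup V] [Module k V]
    {B : BilinForm k V} (hB : B.Nondegenerate) {c : k} (hc : B.flip = c • B)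
    (hodd : Odd (finrank k V)) : c = 1 := by
  have := Module.finite_of_finrank_pos hodd.pos
  have := Module.nontrivial_of_finrank_pos hodd.pos
  have hB0 : B ≠ 0 := by
    rintro rfl
    exact LinearMap.not_separatingLeft_zero V V _ _ hB.1
  have hsq : c ^ 2 = 1 := by
    refine smul_left_injective k (M := BilinForm k V) (m := B) hB0 ?_
    calc c ^ 2 • B = c • B.flip := by rw [hc, smul_smul, sq]
      _ = (c • B).flip := rfl
      _ = (1 : k) • B := by rw [← hc, one_smul]; rfl
  have hpow : c ^ finrank k V = 1 := by
    let b := finBasis k V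
    have hdet := (LinearMap.BilinForm.nondegenerate_iff_det_ne_zero b).1 hB
    refine mul_right_cancel₀ hdet ?_
    calc c ^ finrank k V * (LinearMap.BilinForm.toMatrix b B).det
        = (LinearMap.BilinForm.toMatrix b (c • B)).det := by
          rw [map_smul, Matrix.det_smul, Fintype.card_fin]
      _ = (LinearMap.BilinForm.toMatrix b B).transpose.det := by
          rw [← hc]
          rfl
      _ = 1 * (LinearMap.BilinForm.toMatrix b B).det := by rw [Matrix.det_transpose, one_mul]
  obtain ⟨m, hm⟩ := hodd
  rwa [hm, pow_succ, pow_mul, hsq, one_pow, one_mul] at hpow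

/-- The bilinear form `B` is invariant under the representation `ρ`. For a group this says that
`B`, as a map from `V` to its dual, intertwines `ρ` with the dual representation. -/
def IsInvariantForm {k G V : Type*} [CommRing k] [Monoid G] [AddCommGroup V] [Module k V]
    (ρ : Representation k G V) (B : BilinForm k V) : Prop :=
  ∀ g v w, B (ρ g v) (ρ g w) = B v w

theorem isInvariantForm_iff_isIntertwiningMap_dual {k G V : Type*} [CommRing k] [Group G]
    [AddCommGroup V] [Module k V] {ρ : Representation k G V} {B : BilinForm k V} :
    IsInvariantForm ρ B ↔ ρ.IsIntertwiningMap ρ.dual B := by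
  refine ⟨fun hB => ⟨fun g v => LinearMap.ext fun w => ?_⟩, fun hB g v w => ?_⟩
  · change B (ρ g v) w = B v (ρ g⁻¹ w)
    simpa using hB g v (ρ g⁻¹ w)
  · calc B (ρ g v) (ρ g w) = B v (ρ g⁻¹ (ρ g w)) := congr($(hB.isIntertwining g v) (ρ g w))
      _ = B v w := by rw [inv_self_apply]

theorem IsInvariantForm.flip {k G V : Type*} [CommRing k] [Monoid G] [AddCommGroup V] [Module k V]
    {ρ : Representation k G V} {B : BilinForm k V} (hB : IsInvariantForm ρ B) :
    IsInvariantForm ρ B.flip :=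
  fun g v w => hB g w v

section Irreducible

variable {k G V : Type*} [Field k] [Group G] [AddCommGroup V] [Module k V]
  {ρ : Representation k G V} [IsIrreducible ρ]

theorem IsInvariantForm.nondegenerate {B : BilinForm k V} (hB : IsInvariantForm ρ B)
    (hB0 : B ≠ 0) : B.Nondegenerate := by
  have hsep {C : BilinForm k V} (hC : IsInvariantForm ρ C) (hC0 : C ≠ 0) : C.SeparatingLeft := by
    let f : IntertwiningMap ρ ρ.dual := C.intertwiningMap_of_isIntertwiningMap ρ ρ.dual
      (isInvariantForm_iff_isIntertwiningMap_dual.1 hC).isIntertwining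
    have hf : f ≠ 0 := fun h => hC0 (congrArg IntertwiningMap.toLinearMap h)
    have hinj : Function.Injective C := (IsIrreducible.injective_or_eq_zero f).resolve_right hf
    exact LinearMap.separatingLeft_iff_ker_eq_bot.2 (LinearMap.ker_eq_bot.2 hinj)
  have hflip0 : B.flip ≠ 0 := fun h => hB0 (LinearMap.ext₂ fun v w => congr($h w v))
  exact ⟨hsep hB hB0, LinearMap.flip_separatingLeft.1 (hsep hB.flip hflip0)⟩

variable [IsAlgClosed k] [FiniteDimensional k V]

theorem IsInvariantForm.exists_eq_smul {B₁ B₂ : BilinForm k V} (h₁ : IsInvariantForm ρ B₁)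
    (h₂ : IsInvariantForm ρ B₂) (hB₁ : B₁ ≠ 0) : ∃ c : k, B₂ = c • B₁ := by
  let e : V ≃ₗ[k] Dual k V := B₁.toDual (h₁.nondegenerate hB₁)
  have he (g : G) (v : V) : e (ρ g v) = ρ.dual g (e v) :=
    (isInvariantForm_iff_isIntertwiningMap_dual.1 h₁).isIntertwining g v
  have hcomm (g : G) (v : V) : e.symm (B₂ (ρ g v)) = ρ g (e.symm (B₂ v)) := by
    rw [LinearEquiv.symm_apply_eq, he, LinearEquiv.apply_symm_apply]
    exact (isInvariantForm_iff_isIntertwiningMap_dual.1 h₂).isIntertwining g v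
  let T : IntertwiningMap ρ ρ :=
    (e.symm.toLinearMap ∘ₗ B₂).intertwiningMap_of_isIntertwiningMap ρ ρ hcomm
  obtain ⟨c, hc⟩ := IsIrreducible.algebraMap_intertwiningMap_bijective_of_isAlgClosed.2 T
  refine ⟨c, LinearMap.ext fun v => ?_⟩
  have hv : c • v = e.symm (B₂ v) := congr($hc v)
  calc B₂ v = e (c • v) := by rw [hv, e.apply_symm_apply]
    _ = (c • B₁) v := map_smul e c v

theorem IsInvariantForm.isSymm_of_odd_finrank {B : BilinForm k V} (hB : IsInvariantForm ρ B)
    (hodd : Odd (finrank k V)) : B.IsSymm := by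
  obtain rfl | hB0 := eq_or_ne B 0
  · exact ⟨fun _ _ => rfl⟩
  obtain ⟨c, hc⟩ := hB.exists_eq_smul hB.flip hB0
  obtain rfl := eq_one_of_flip_eq_smul (hB.nondegenerate hB0) hc hodd
  exact ⟨fun v w => by simpa using congr($hc w v)⟩

end Irreducible

section RealClasses

variable {k G V : Type*} [Field k] [Group G] [Finite G] [NeZero (Nat.card G : k)]
  [AddCommGroup V] [Module k V] [FiniteDimensional k V]

theorem natCast_finrank_intertwiningMap_dual (hG : ∀ g : G, IsConj g g⁻¹)
    (ρ : Representation k G V) :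
    (finrank k (IntertwiningMap ρ ρ.dual) : k) = finrank k (IntertwiningMap ρ ρ) := by
  have := Fintype.ofFinite G
  have := invertibleOfNonzero (NeZero.ne (Nat.card G : k))
  have hreal (g : G) : ρ.character g⁻¹ = ρ.character g := by
    obtain ⟨h, hh⟩ := isConj_iff.1 (hG g)
    rw [← hh, char_conj]
  rw [← card_inv_mul_sum_char_mul_char_eq_finrank, ← card_inv_mul_sum_char_mul_char_eq_finrank]
  simp only [char_dual, hreal]

theorem exists_isInvariantForm_ne_zero [IsAlgClosed k] (hG : ∀ g : G, IsConj g g⁻¹)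
    (ρ : Representation k G V) [IsIrreducible ρ] :
    ∃ B : BilinForm k V, IsInvariantForm ρ B ∧ B ≠ 0 := by
  have : Nontrivial (IntertwiningMap ρ ρ.dual) := by
    by_contra! h
    simpa [finrank_zero_of_subsingleton] using natCast_finrank_intertwiningMap_dual hG ρ
  obtain ⟨f, hf⟩ := exists_ne (0 : IntertwiningMap ρ ρ.dual)
  exact ⟨f.toLinearMap, isInvariantForm_iff_isIntertwiningMap_dual.2 ⟨f.isIntertwining⟩,
    fun h => hf (IntertwiningMap.ext h)⟩

end RealClasses

theorem isIrreducible_of_simple {k G : Type*} [Field k] [Monoid G] (U : FDRep k G)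
    [CategoryTheory.Simple U] : IsIrreducible U.ρ := by
  have hne : Nontrivial U := by
    by_contra h
    rw [not_nontrivial_iff_subsingleton] at h
    exact CategoryTheory.id_nonzero U (by ext v; exact Subsingleton.elim _ _)
  refine { exists_pair_ne := ⟨⊥, ⊤, fun h => ?_⟩, eq_bot_or_eq_top := fun W => ?_ }
  · exact bot_ne_top (congrArg Subrepresentation.toSubmodule h)
  let ι : FDRep.of W.toRepresentation ⟶ U :=
    ⟨FGModuleCat.ofHom W.toSubmodule.subtype, fun g => rfl⟩
  have : CategoryTheory.Mono ι :=
    CategoryTheory.ConcreteCategory.mono_of_injective ι Subtype.val_injective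
  by_cases hι : ι = 0
  · left
    refine Subrepresentation.toSubmodule_injective ((Submodule.eq_bot_iff _).2 fun v hv => ?_)
    exact congr($(hι).hom.hom.hom ⟨v, hv⟩)
  · right
    have := CategoryTheory.isIso_of_mono_of_nonzero hι
    refine Subrepresentation.toSubmodule_injective (Submodule.eq_top_iff'.2 fun v => ?_)
    obtain ⟨w, rfl⟩ := (CategoryTheory.ConcreteCategory.bijective_of_isIso ι).2 v
    exact w.2

theorem exists_unique_invariant_form_sl2_f8_dim9_general {k G V : Type*} [Field k]
    [IsAlgClosed k] [Group G] [Finite G] [NeZero (Nat.card G : k)] [AddCommGroup V] [Module k V]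
    (hG : ∀ g : G, IsConj g g⁻¹) (ρ : Representation k G V) [IsIrreducible ρ]
    (hodd : Odd (finrank k V)) :
    (∃ B : BilinForm k V, IsInvariantForm ρ B ∧ B.IsSymm ∧ B.Nondegenerate) ∧
    (∀ B₁ B₂ : BilinForm k V, IsInvariantForm ρ B₁ → IsInvariantForm ρ B₂ → B₁ ≠ 0 →
      ∃ c : k, B₂ = c • B₁) := by
  have := Module.finite_of_finrank_pos hodd.pos
  obtain ⟨B, hB, hB0⟩ := exists_isInvariantForm_ne_zero hG ρ
  exact ⟨⟨B, hB, hB.isSymm_of_odd_finrank hodd, hB.nondegenerate hB0⟩,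
    fun _ _ h₁ h₂ hB₁ => h₁.exists_eq_smul h₂ hB₁⟩

/-- An irreducible 9-dimensional complex representation U of SL(2, F_8) carries a
nondegenerate invariant symmetric bilinear form, unique up to a scalar. -/
theorem exists_unique_invariant_form_sl2_f8_dim9
    (U : FDRep ℂ (Matrix.SpecialLinearGroup (Fin 2) (GaloisField 2 3)))
    [CategoryTheory.Simple U]
    (hdim : Module.finrank ℂ U = 9) :
    (∃ B : LinearMap.BilinForm ℂ U,
      (∀ (g : Matrix.SpecialLinearGroup (Fin 2) (GaloisField 2 3)) (v w : U),
        B (U.ρ g v) (U.ρ g w) = B v w) ∧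
      (∀ v w : U, B v w = B w v) ∧
      (∀ v : U, (∀ w : U, B v w = 0) → v = 0)) ∧
    (∀ B₁ B₂ : LinearMap.BilinForm ℂ U,
      (∀ (g : Matrix.SpecialLinearGroup (Fin 2) (GaloisField 2 3)) (v w : U),
        B₁ (U.ρ g v) (U.ρ g w) = B₁ v w) →
      (∀ (g : Matrix.SpecialLinearGroup (Fin 2) (GaloisField 2 3)) (v w : U),
        B₂ (U.ρ g v) (U.ρ g w) = B₂ v w) →
      B₁ ≠ 0 → B₂ ≠ 0 → ∃ c : ℂ, B₂ = c • B₁) := by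
  have := isIrreducible_of_simple U
  obtain ⟨⟨B, hB, hsymm, hnd⟩, huniq⟩ := exists_unique_invariant_form_sl2_f8_dim9_general
    isConj_inv_of_charTwo U.ρ (hdim ▸ by decide)
  exact ⟨⟨B, hB, hsymm.eq, hnd.1⟩, fun B₁ B₂ h₁ h₂ hB₁ _ => huniq B₁ B₂ h₁ h₂ hB₁⟩
end

section
/- The group PSp(4, F_3), the quotient of the symplectic group Sp(4, F_3) by its center, admits a faithful complex linear representation of dimension 5. -/
/-!
The Heisenberg operators on the `N = q ^ n` dimensional space of complex functions on `F ^ n`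
multiply according to the symplectic form on `F ^ n × F ^ n` and act irreducibly, so every
symplectic `g` is implemented by an operator `T`, unique up to a scalar. Such a `T` preserves the
even functions, a space of dimension `(N + 1) / 2`, and the condition `det (T | even) ^ 2 = det T`
fixes the scalar multiplicatively. The resulting linear representation sends `-1` to
`f ↦ (x ↦ f (-x))` as soon as this reflection has determinant `1`, that is, when `N ≡ 1 [MOD 4]`;
then the center acts trivially on even functions. Conversely, an element that acts trivially on
them is `± 1`, as one sees from the even functions built from the delta function at `0` and from the
constant function `1`. For `F = ZMod 3` and `n = 2`, `N = 9` and the even functions have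
dimension `5`.
-/

open Matrix Module

namespace WeilRepresentation

theorem eq_or_eq_neg_of_forall_eq_or_eq_neg {G H : Type*} [AddGroup G] [AddCommGroup H]
    {φ χ : G →+ H} (h : ∀ x, φ x = χ x ∨ φ x = -χ x) : φ = χ ∨ φ = -χ := by
  by_contra! hne
  obtain ⟨x, hx⟩ := DFunLike.ne_iff.1 hne.1
  obtain ⟨y, hy⟩ := DFunLike.ne_iff.1 hne.2
  rw [AddMonoidHom.neg_apply] at hy
  have hφx : φ x = -χ x := (h x).resolve_left hx
  have hφy : φ y = χ y := (h y).resolve_right hy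
  rcases h (x + y) with hxy | hxy <;> rw [map_add, map_add, hφx, hφy] at hxy
  · exact hx (hφx.trans (add_right_cancel hxy))
  · rw [neg_add] at hxy
    exact hy (hφy.trans (add_left_cancel hxy))

theorem add_self_eq_zero_iff_of_odd_card {G : Type*} [AddGroup G] [Fintype G]
    (hodd : Odd (Fintype.card G)) {x : G} : x + x = 0 ↔ x = 0 := by
  have hcop : (Nat.card G).Coprime 2 := by simpa using hodd
  rw [← two_nsmul, ← (Nat.Coprime.nsmul_right_bijective hcop).injective.eq_iff (a := x), nsmul_zero]

section SymplecticForm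

variable {l R : Type*} [Fintype l] [DecidableEq l] [CommRing R]

variable (l R) in
/-- The standard symplectic form on `l ⊕ l → R`, whose Gram matrix is `Matrix.J`. -/
noncomputable def symplecticForm : LinearMap.BilinForm R (l ⊕ l → R) :=
  Matrix.toBilin' (J l R)

theorem symplecticForm_apply (v w : l ⊕ l → R) :
    symplecticForm l R v w =
      (w ∘ Sum.inl) ⬝ᵥ (v ∘ Sum.inr) - (v ∘ Sum.inl) ⬝ᵥ (w ∘ Sum.inr) := by
  rw [symplecticForm, toBilin'_apply', J, fromBlocks_mulVec, ← Sum.elim_comp_inl_inr v]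
  simp only [zero_mulVec, neg_mulVec, one_mulVec, zero_add, add_zero,
    sumElim_dotProduct_sumElim, dotProduct_neg, Sum.elim_comp_inl, Sum.elim_comp_inr]
  rw [dotProduct_comm (w ∘ Sum.inl)]
  ring

theorem symplecticForm_isAlt : (symplecticForm l R).IsAlt := fun v => by
  rw [symplecticForm_apply, sub_self]

theorem mem_symplecticGroup_iff {g : Matrix (l ⊕ l) (l ⊕ l) R} :
    g ∈ symplecticGroup l R ↔
      ∀ v w, symplecticForm l R (g *ᵥ v) (g *ᵥ w) = symplecticForm l R v w := by
  rw [SymplecticGroup.mem_iff', ← toBilin'.injective.eq_iff, ← toBilin'_comp,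
    LinearMap.ext_iff₂]
  rfl

theorem mulVec_injective_of_mem_symplecticGroup {g : Matrix (l ⊕ l) (l ⊕ l) R}
    (hg : g ∈ symplecticGroup l R) : Function.Injective (g *ᵥ ·) :=
  mulVec_injective_of_isUnit ((isUnit_iff_isUnit_det g).2 (SymplecticGroup.symplectic_det hg))

theorem exists_symplecticForm_ne_zero {w : l ⊕ l → R} (hw : w ≠ 0) :
    ∃ v, symplecticForm l R v w ≠ 0 := by
  have hJ : (J l R).Nondegenerate :=
    .of_det_mem_nonZeroDivisors (isUnit_det_J l R).mem_nonZeroDivisors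
  obtain ⟨v, hv⟩ := hJ.exists_not_ortho_of_ne_zero' hw
  exact ⟨v, by rwa [symplecticForm, toBilin'_apply']⟩

/-- The symplectic transvection `v ↦ v + ⟪v, w⟫ w`, where `⟪·, ·⟫` is the symplectic form. -/
noncomputable def symplecticTransvection (w : l ⊕ l → R) : symplecticGroup l R :=
  ⟨LinearMap.toMatrix' (LinearMap.transvection ((symplecticForm l R).flip w) w), by
    rw [mem_symplecticGroup_iff]
    intro u v
    have hneg := symplecticForm_isAlt.neg_eq w v
    simp only [LinearMap.toMatrix'_mulVec, LinearMap.transvection.apply,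
      LinearMap.BilinForm.flip_apply, map_add, map_smul, LinearMap.add_apply,
      LinearMap.smul_apply, smul_eq_mul, symplecticForm_isAlt.self_eq_zero, ← hneg]
    ring⟩

theorem symplecticTransvection_mulVec (w v : l ⊕ l → R) :
    (symplecticTransvection w).1 *ᵥ v = v + symplecticForm l R v w • w := by
  simp [symplecticTransvection, LinearMap.transvection.apply]

theorem eq_one_of_mem_symplecticGroup {g : Matrix (l ⊕ l) (l ⊕ l) R}
    (hg : g ∈ symplecticGroup l R) (hinl : ∀ v, (g *ᵥ v) ∘ Sum.inl = v ∘ Sum.inl)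
    (hinr : ∀ a, (g *ᵥ Sum.elim a 0) ∘ Sum.inr = 0) : g = 1 := by
  refine ext_of_mulVec_single fun i => ?_
  rw [one_mulVec]
  set v : l ⊕ l → R := Pi.single i 1
  have hmom : (g *ᵥ v) ∘ Sum.inr = v ∘ Sum.inr := dotProduct_eq _ _ fun a => by
    have := mem_symplecticGroup_iff.1 hg v (Sum.elim a 0)
    rw [symplecticForm_apply, symplecticForm_apply, hinl, hinr] at this
    simpa [dotProduct_comm a] using this
  rw [← Sum.elim_comp_inl_inr (g *ᵥ v), hinl, hmom, Sum.elim_comp_inl_inr]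

theorem eq_one_or_eq_neg_one_of_forall_mulVec {n : Type*} [Fintype n] [DecidableEq n]
    {g : Matrix n n R} (h : ∀ v, g *ᵥ v = v ∨ g *ᵥ v = -v) : g = 1 ∨ g = -1 := by
  rcases eq_or_eq_neg_of_forall_eq_or_eq_neg (φ := g.mulVecLin.toAddMonoidHom)
    (χ := AddMonoidHom.id _) h with hg | hg
  · left
    refine ext_of_mulVec_single fun i => ?_
    rw [one_mulVec]
    exact DFunLike.congr_fun hg (Pi.single i 1)
  · right
    refine ext_of_mulVec_single fun i => ?_
    rw [neg_mulVec, one_mulVec]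
    exact DFunLike.congr_fun hg (Pi.single i 1)

theorem mem_center_of_eq_one_or_eq_neg_one {g : symplecticGroup l R} (h : g.1 = 1 ∨ g.1 = -1) :
    g ∈ Subgroup.center (symplecticGroup l R) := by
  rw [Subgroup.mem_center_iff]
  intro k
  apply Subtype.ext
  rcases h with h | h <;> simp [h]

theorem mulVec_eq_or_eq_neg_of_mem_center {F : Type*} [Field F] {g : symplecticGroup l F}
    (hg : g ∈ Subgroup.center (symplecticGroup l F)) (w : l ⊕ l → F) :
    g.1 *ᵥ w = w ∨ g.1 *ᵥ w = -w := by
  obtain rfl | hw := eq_or_ne w 0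
  · simp
  obtain ⟨u, hu⟩ := exists_symplecticForm_ne_zero hw
  set v := (symplecticForm l F u w)⁻¹ • u with hv
  have hvw : symplecticForm l F v w = 1 := by simp [hv, hu]
  have hcomm : (symplecticTransvection w).1 *ᵥ (g.1 *ᵥ v) =
      g.1 *ᵥ ((symplecticTransvection w).1 *ᵥ v) := by
    rw [mulVec_mulVec, mulVec_mulVec]
    exact congr($(Subgroup.mem_center_iff.1 hg (symplecticTransvection w)).1 *ᵥ v)
  have heigen : g.1 *ᵥ w = symplecticForm l F (g.1 *ᵥ v) w • w := by
    rw [symplecticTransvection_mulVec, symplecticTransvection_mulVec, hvw, one_smul,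
      mulVec_add] at hcomm
    exact (add_left_cancel hcomm).symm
  have hsq := mem_symplecticGroup_iff.1 g.2 v w
  rw [heigen, map_smul, hvw, smul_eq_mul, mul_self_eq_one_iff] at hsq
  rcases hsq with hc | hc <;> rw [heigen, hc] <;> simp

end SymplecticForm

section Parity

variable (X : Type*) [AddGroup X]

/-- The operator `f ↦ (x ↦ f (-x))` on complex functions. -/
def parity : Module.End ℂ (X → ℂ) :=
  LinearMap.funLeft ℂ ℂ Neg.neg

/-- The space of even functions, i.e. the `1`-eigenspace of `parity`. -/
def evenFunctions : Submodule ℂ (X → ℂ) :=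
  LinearMap.eqLocus (parity X) 1

variable {X}

theorem parity_apply (f : X → ℂ) (x : X) : parity X f x = f (-x) :=
  rfl

theorem mem_evenFunctions {f : X → ℂ} : f ∈ evenFunctions X ↔ ∀ x, f (-x) = f x :=
  funext_iff

theorem parity_mul_parity : parity X * parity X = 1 := by
  ext f x
  simp [parity_apply]

theorem parity_eq_of_mem_evenFunctions {f : X → ℂ} (hf : f ∈ evenFunctions X) : parity X f = f :=
  hf

theorem parity_mem_evenFunctions {f : X → ℂ} (hf : f ∈ evenFunctions X) :
    parity X f ∈ evenFunctions X := by
  rwa [parity_eq_of_mem_evenFunctions hf]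

theorem restrict_parity : (parity X).restrict (fun _ => parity_mem_evenFunctions) = 1 :=
  LinearMap.ext fun f => Subtype.ext (parity_eq_of_mem_evenFunctions f.2)

theorem parity_add_self_mem_evenFunctions (f : X → ℂ) : parity X f + f ∈ evenFunctions X :=
  mem_evenFunctions.2 fun x => by simp [parity_apply, add_comm]

variable [Fintype X]

theorem trace_parity (hodd : Odd (Fintype.card X)) : LinearMap.trace ℂ _ (parity X) = 1 := by
  classical
  have hneg (x : X) : -x = x ↔ x = 0 := by
    rw [neg_eq_iff_add_eq_zero, add_self_eq_zero_iff_of_odd_card hodd]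
  rw [LinearMap.trace_eq_matrix_trace ℂ (Pi.basisFun ℂ X), Matrix.trace]
  simp [parity_apply, Pi.single_apply, hneg]

/-- The operator `(1 + parity) / 2` is a projection onto the even functions. -/
theorem two_mul_finrank_evenFunctions (hodd : Odd (Fintype.card X)) :
    2 * finrank ℂ (evenFunctions X) = Fintype.card X + 1 := by
  have hproj : LinearMap.IsProj (evenFunctions X) ((2⁻¹ : ℂ) • (parity X + 1)) :=
    ⟨fun f => (evenFunctions X).smul_mem _ (parity_add_self_mem_evenFunctions f), fun f hf => by
      rw [LinearMap.smul_apply, LinearMap.add_apply, parity_eq_of_mem_evenFunctions hf,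
        Module.End.one_apply, ← two_smul ℂ f, inv_smul_smul₀ two_ne_zero]⟩
  have htrace := hproj.trace
  rw [map_smul, map_add, trace_parity hodd, LinearMap.trace_one, finrank_fintype_fun_eq_card,
    smul_eq_mul, inv_mul_eq_iff_eq_mul₀ two_ne_zero] at htrace
  rw [add_comm]
  exact_mod_cast htrace.symm

theorem det_parity (hcard : Fintype.card X % 4 = 1) : LinearMap.det (parity X) = 1 := by
  have hodd : Odd (Fintype.card X) := Nat.odd_iff.2 (by lia)
  have hle : evenFunctions X ≤ (evenFunctions X).comap (parity X) :=
    fun _ => parity_mem_evenFunctions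
  have hquot : (evenFunctions X).mapQ _ (parity X) hle = -1 := by
    refine Submodule.linearMap_qext _ (LinearMap.ext fun f => ?_)
    have hsum : (evenFunctions X).mkQ (parity X f) + (evenFunctions X).mkQ f = 0 :=
      (Submodule.Quotient.mk_eq_zero _).2 (parity_add_self_mem_evenFunctions f)
    exact eq_neg_of_add_eq_zero_left hsum
  have hrank : Even (finrank ℂ ((X → ℂ) ⧸ evenFunctions X)) := by
    have hsum := (evenFunctions X).finrank_quotient_add_finrank
    have htwo := two_mul_finrank_evenFunctions hodd
    rw [finrank_fintype_fun_eq_card] at hsum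
    exact Nat.even_iff.2 (by lia)
  rw [LinearMap.det_eq_det_mul_det _ _ hle, restrict_parity, hquot, map_one, one_mul,
    ← neg_one_smul ℂ (1 : Module.End ℂ _), LinearMap.det_smul, map_one, mul_one, hrank.neg_one_pow]

end Parity

theorem exists_apply_ne_one_of_isPrimitive {R M : Type*} [CommRing R] [AddCommGroup M]
    [Module R M] {M' : Type*} [CommMonoid M'] {ψ : AddChar R M'}
    (hψ : ψ.IsPrimitive) {φ : M →ₗ[R] R} (hφ : φ ≠ 0) :
    ∃ x, ψ (φ x) ≠ 1 := by
  obtain ⟨x, hx⟩ := DFunLike.ne_iff.1 hφ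
  obtain ⟨r, hr⟩ := AddChar.ne_one_iff.1 (hψ hx)
  refine ⟨r • x, ?_⟩
  rwa [map_smul, smul_eq_mul, mul_comm, ← AddChar.mulShift_apply]

theorem exists_apply_dotProduct_add_self_ne_one {l R : Type*} [Fintype l] [DecidableEq l]
    [CommRing R] [Fintype R] {M' : Type*} [CommMonoid M'] {ψ : AddChar R M'}
    (hψ : ψ.IsPrimitive) (hodd : Odd (Fintype.card (l → R))) {x : l → R} (hx : x ≠ 0) :
    ∃ y, ψ (y ⬝ᵥ (x + x)) ≠ 1 := by
  have hxx : x + x ≠ 0 := (add_self_eq_zero_iff_of_odd_card hodd).not.2 hx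
  obtain ⟨y, hy⟩ := exists_apply_ne_one_of_isPrimitive hψ (φ := dotProductBilin R R (x + x))
    fun h => hxx (dotProduct_eq_zero _ fun y => DFunLike.congr_fun h y)
  exact ⟨y, by rwa [dotProduct_comm]⟩

section Heisenberg

variable {l R : Type*} [Fintype l] [CommRing R]

/-- The Heisenberg operator attached to `v = (a, b)`, acting on functions on `l → R`: it translates
by `a` and modulates by `b`. The phase `ψ (-a ⬝ᵥ b)` makes the cocycle of `heisenberg_mul` a
character of the symplectic form without dividing by two. -/
def heisenberg (ψ : AddChar R ℂ) (v : l ⊕ l → R) : Module.End ℂ ((l → R) → ℂ) where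
  toFun f x := ψ ((v ∘ Sum.inr) ⬝ᵥ (x + x) - (v ∘ Sum.inl) ⬝ᵥ (v ∘ Sum.inr)) *
    f (x - v ∘ Sum.inl)
  map_add' f₁ f₂ := by ext x; exact mul_add _ _ _
  map_smul' c f := by ext x; exact mul_left_comm _ _ _

variable (ψ : AddChar R ℂ)

theorem heisenberg_apply (v : l ⊕ l → R) (f : (l → R) → ℂ) (x : l → R) :
    heisenberg ψ v f x =
      ψ ((v ∘ Sum.inr) ⬝ᵥ (x + x) - (v ∘ Sum.inl) ⬝ᵥ (v ∘ Sum.inr)) * f (x - v ∘ Sum.inl) :=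
  rfl

theorem heisenberg_zero : heisenberg ψ (0 : l ⊕ l → R) = 1 := by
  ext f x
  simp [heisenberg_apply]

theorem heisenberg_single_zero [DecidableEq R] (v : l ⊕ l → R) :
    heisenberg ψ v (Pi.single 0 1) =
      ψ ((v ∘ Sum.inl) ⬝ᵥ (v ∘ Sum.inr)) • Pi.single (v ∘ Sum.inl) 1 := by
  ext x
  obtain rfl | hx := eq_or_ne x (v ∘ Sum.inl)
  · simp [heisenberg_apply, dotProduct_comm (v ∘ Sum.inl)]
  · simp [heisenberg_apply, hx, sub_eq_zero]

theorem parity_mul_heisenberg (v : l ⊕ l → R) :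
    parity (l → R) * heisenberg ψ v = heisenberg ψ (-v) * parity (l → R) := by
  refine LinearMap.ext fun f => funext fun x => ?_
  simp only [Module.End.mul_apply, parity_apply, heisenberg_apply, Pi.neg_comp, ← neg_add,
    dotProduct_neg, neg_dotProduct, neg_neg, sub_neg_eq_add]
  rw [neg_add' x]

/-- `T` implements the linear substitution `v ↦ g *ᵥ v` on the Heisenberg operators. -/
def Intertwines (ψ : AddChar R ℂ) (g : Matrix (l ⊕ l) (l ⊕ l) R)
    (T : Module.End ℂ ((l → R) → ℂ)) : Prop :=
  ∀ v, T * heisenberg ψ v = heisenberg ψ (g *ᵥ v) * T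

variable {ψ}

namespace Intertwines

variable {g h : Matrix (l ⊕ l) (l ⊕ l) R} {S T : Module.End ℂ ((l → R) → ℂ)}

theorem mul (hS : Intertwines ψ g S) (hT : Intertwines ψ h T) :
    Intertwines ψ (g * h) (S * T) := fun v => by
  rw [mul_assoc, hT, ← mul_assoc, hS, mul_assoc, mulVec_mulVec]

theorem smul (hT : Intertwines ψ g T) (c : ℂ) : Intertwines ψ g (c • T) := fun v => by
  rw [smul_mul_assoc, hT, mul_smul_comm]

end Intertwines

/-- `T` is the normalized Weil operator of `g`: among the multiples of an intertwining operator,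
the condition `det (T | even) ^ 2 = det T` singles out one, because the two sides have degrees
`N + 1` and `N` in the scalar, where `N` is the number of points of `l → R`. -/
structure IsWeilOperator (ψ : AddChar R ℂ) (g : Matrix (l ⊕ l) (l ⊕ l) R)
    (T : Module.End ℂ ((l → R) → ℂ)) : Prop where
  intertwines : Intertwines ψ g T
  isUnit : IsUnit T
  mapsTo : ∀ f ∈ evenFunctions (l → R), T f ∈ evenFunctions (l → R)
  det_restrict_sq : LinearMap.det (T.restrict mapsTo) ^ 2 = LinearMap.det T

theorem IsWeilOperator.mul {g h : Matrix (l ⊕ l) (l ⊕ l) R} {S T : Module.End ℂ ((l → R) → ℂ)}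
    (hS : IsWeilOperator ψ g S) (hT : IsWeilOperator ψ h T) :
    IsWeilOperator ψ (g * h) (S * T) where
  intertwines := hS.intertwines.mul hT.intertwines
  isUnit := hS.isUnit.mul hT.isUnit
  mapsTo f hf := hS.mapsTo _ (hT.mapsTo f hf)
  det_restrict_sq := by
    have hrestrict : (S * T).restrict (fun f hf => hS.mapsTo _ (hT.mapsTo f hf)) =
        S.restrict hS.mapsTo * T.restrict hT.mapsTo := rfl
    rw [hrestrict, map_mul, map_mul, mul_pow, hS.det_restrict_sq, hT.det_restrict_sq]

variable [DecidableEq l] (ψ)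

theorem heisenberg_mul (v w : l ⊕ l → R) :
    heisenberg ψ v * heisenberg ψ w = ψ (symplecticForm l R v w) • heisenberg ψ (v + w) := by
  refine LinearMap.ext fun f => funext fun x => ?_
  simp only [Module.End.mul_apply, LinearMap.smul_apply, Pi.smul_apply, heisenberg_apply,
    smul_eq_mul, ← mul_assoc, ← AddChar.map_add_eq_mul, Pi.add_comp, ← sub_sub]
  congr 2
  simp only [symplecticForm_apply, dotProduct_add, add_dotProduct, dotProduct_sub]
  rw [dotProduct_comm (w ∘ Sum.inr) (v ∘ Sum.inl), dotProduct_comm (w ∘ Sum.inl) (v ∘ Sum.inr)]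
  ring

omit [DecidableEq l] in
theorem heisenberg_mul_neg (v : l ⊕ l → R) : heisenberg ψ v * heisenberg ψ (-v) = 1 := by
  classical
  rw [heisenberg_mul, map_neg, symplecticForm_isAlt.self_eq_zero, neg_zero,
    AddChar.map_zero_eq_one, one_smul, add_neg_cancel, heisenberg_zero]

omit [DecidableEq l] in
theorem heisenberg_neg_mul (v : l ⊕ l → R) : heisenberg ψ (-v) * heisenberg ψ v = 1 := by
  simpa using heisenberg_mul_neg ψ (-v)

theorem heisenberg_conj (v w : l ⊕ l → R) :
    heisenberg ψ v * heisenberg ψ w * heisenberg ψ (-v) =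
      ψ (symplecticForm l R v (w + w)) • heisenberg ψ w := by
  rw [heisenberg_mul, smul_mul_assoc, heisenberg_mul, smul_smul, ← AddChar.map_add_eq_mul,
    add_neg_cancel_comm]
  congr 2
  rw [map_neg, map_add, LinearMap.add_apply, symplecticForm_isAlt.self_eq_zero, map_add,
    ← symplecticForm_isAlt.neg_eq v w]
  ring

variable {ψ}

theorem Intertwines.one : Intertwines ψ (1 : Matrix (l ⊕ l) (l ⊕ l) R) 1 := fun v => by
  rw [one_mulVec, one_mul, mul_one]

theorem intertwines_parity : Intertwines ψ (-1 : Matrix (l ⊕ l) (l ⊕ l) R) (parity (l → R)) :=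
  fun v => by rw [neg_mulVec, one_mulVec, parity_mul_heisenberg]

theorem IsWeilOperator.one : IsWeilOperator ψ (1 : Matrix (l ⊕ l) (l ⊕ l) R) 1 where
  intertwines := .one
  isUnit := isUnit_one
  mapsTo _ hf := hf
  det_restrict_sq := by
    have hrestrict : (1 : Module.End ℂ ((l → R) → ℂ)).restrict (p := evenFunctions (l → R))
        (fun _ hf => hf) = 1 := rfl
    rw [hrestrict, map_one, map_one, one_pow]

variable [Fintype R]

/-- Conjugating by a suitable Heisenberg operator multiplies `heisenberg ψ v` by a nontrivial
scalar. -/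
theorem trace_heisenberg_of_ne_zero (hψ : ψ.IsPrimitive)
    (hodd : Odd (Fintype.card (l → R))) {v : l ⊕ l → R} (hv : v ≠ 0) :
    LinearMap.trace ℂ _ (heisenberg ψ v) = 0 := by
  have hoddV : Odd (Fintype.card (l ⊕ l → R)) := by
    rw [Fintype.card_congr (Equiv.sumArrowEquivProdArrow l l R), Fintype.card_prod]
    exact hodd.mul hodd
  have hvv : v + v ≠ 0 := (add_self_eq_zero_iff_of_odd_card hoddV).not.2 hv
  obtain ⟨u, hu⟩ := exists_symplecticForm_ne_zero hvv
  obtain ⟨w, hw⟩ := exists_apply_ne_one_of_isPrimitive hψ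
    (φ := (symplecticForm l R).flip (v + v)) (fun h => hu (DFunLike.congr_fun h u))
  have hconj := congrArg (LinearMap.trace ℂ _) (heisenberg_conj ψ w v)
  rw [LinearMap.trace_mul_cycle, heisenberg_neg_mul, one_mul, map_smul, smul_eq_mul] at hconj
  by_contra h0
  exact hw ((right_eq_mul₀ h0).1 hconj)

/-- An operator commuting with all `heisenberg ψ (0, b)` preserves the functions supported at `0`,
and the operators `heisenberg ψ (a, 0)` translate this information to every other point. -/
theorem exists_eq_smul_one_of_forall_commute (hψ : ψ.IsPrimitive)
    (hodd : Odd (Fintype.card (l → R))) {T : Module.End ℂ ((l → R) → ℂ)}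
    (hT : ∀ v, Commute T (heisenberg ψ v)) : ∃ c : ℂ, T = c • 1 := by
  classical
  have hcomm (v) (f) : T (heisenberg ψ v f) = heisenberg ψ v (T f) := DFunLike.congr_fun (hT v) f
  have hzero : T (Pi.single 0 1) = T (Pi.single 0 1) 0 • Pi.single 0 1 := by
    ext x
    obtain rfl | hx := eq_or_ne x 0
    · simp
    obtain ⟨b, hb⟩ := exists_apply_dotProduct_add_self_ne_one hψ hodd hx
    have hfix := congrFun (hcomm (Sum.elim 0 b) (Pi.single 0 1)) x
    rw [heisenberg_single_zero, heisenberg_apply] at hfix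
    simp only [Sum.elim_comp_inl, Sum.elim_comp_inr, zero_dotProduct, AddChar.map_zero_eq_one,
      one_smul, sub_zero] at hfix
    by_contra h0
    exact hb ((right_eq_mul₀ (by simpa [hx] using h0)).1 hfix)
  refine ⟨T (Pi.single 0 1) 0, (Pi.basisFun ℂ (l → R)).ext fun a => ?_⟩
  have htranslate : heisenberg ψ (Sum.elim a 0) (Pi.single 0 1) = Pi.single a 1 := by
    simp [heisenberg_single_zero]
  rw [Pi.basisFun_apply, ← htranslate, hcomm, hzero]
  simp

theorem Intertwines.exists_eq_smul {g : Matrix (l ⊕ l) (l ⊕ l) R}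
    {S T : Module.End ℂ ((l → R) → ℂ)} (hS : Intertwines ψ g S) (hT : Intertwines ψ g T)
    (hSunit : IsUnit S) (hψ : ψ.IsPrimitive) (hodd : Odd (Fintype.card (l → R))) :
    ∃ c : ℂ, T = c • S := by
  obtain ⟨S, rfl⟩ := hSunit
  obtain ⟨c, hc⟩ := exists_eq_smul_one_of_forall_commute (T := ↑S⁻¹ * T) hψ hodd fun v => by
    rw [Commute, SemiconjBy, mul_assoc, hT, Units.inv_mul_eq_iff_eq_mul, ← mul_assoc,
      ← mul_assoc, hS, Units.mul_inv_cancel_right]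
  exact ⟨c, by rw [(Units.inv_mul_eq_iff_eq_mul _).1 hc, mul_smul_comm, mul_one]⟩

/-- The unnormalized average of an operator `A` over the Heisenberg operators, twisted by `g`;
it produces intertwining operators. -/
noncomputable def twistedAverage (ψ : AddChar R ℂ) (g : Matrix (l ⊕ l) (l ⊕ l) R)
    (A : Module.End ℂ ((l → R) → ℂ)) : Module.End ℂ ((l → R) → ℂ) :=
  ∑ v, heisenberg ψ (g *ᵥ v) * A * heisenberg ψ (-v)

theorem intertwines_twistedAverage {g : Matrix (l ⊕ l) (l ⊕ l) R} (hg : g ∈ symplecticGroup l R)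
    (A : Module.End ℂ ((l → R) → ℂ)) : Intertwines ψ g (twistedAverage ψ g A) := by
  intro u
  rw [twistedAverage, Finset.sum_mul, Finset.mul_sum]
  refine (Fintype.sum_equiv (Equiv.addLeft u) _ _ fun v => ?_).symm
  have hform : symplecticForm l R (-(u + v)) u = symplecticForm l R u v := by
    rw [map_neg, map_add, LinearMap.neg_apply, LinearMap.add_apply,
      symplecticForm_isAlt.self_eq_zero, zero_add, symplecticForm_isAlt.neg_eq]
  calc heisenberg ψ (g *ᵥ u) * (heisenberg ψ (g *ᵥ v) * A * heisenberg ψ (-v))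
      = ψ (symplecticForm l R u v) • (heisenberg ψ (g *ᵥ (u + v)) * A * heisenberg ψ (-v)) := by
        rw [← mul_assoc, ← mul_assoc, heisenberg_mul, mem_symplecticGroup_iff.1 hg, ← mulVec_add,
          smul_mul_assoc, smul_mul_assoc]
    _ = heisenberg ψ (g *ᵥ (u + v)) * A * (heisenberg ψ (-(u + v)) * heisenberg ψ u) := by
        rw [heisenberg_mul, hform, mul_smul_comm, neg_add_rev, neg_add_cancel_right]
    _ = _ := (mul_assoc _ _ _).symm

theorem twistedAverage_one (hψ : ψ.IsPrimitive) (hodd : Odd (Fintype.card (l → R)))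
    (A : Module.End ℂ ((l → R) → ℂ)) :
    twistedAverage ψ 1 A = (Fintype.card (l → R) * LinearMap.trace ℂ _ A) • 1 := by
  have hN : (Fintype.card (l → R) : ℂ) ≠ 0 := Nat.cast_ne_zero.2 Fintype.card_ne_zero
  obtain ⟨c, hc⟩ := exists_eq_smul_one_of_forall_commute hψ hodd
    (T := twistedAverage ψ 1 A) fun v => by
      have := intertwines_twistedAverage (ψ := ψ) (one_mem _) A v
      rwa [one_mulVec] at this
  have hterm (v : l ⊕ l → R) :
      LinearMap.trace ℂ _ (heisenberg ψ v * A * heisenberg ψ (-v)) = LinearMap.trace ℂ _ A := by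
    rw [LinearMap.trace_mul_cycle, heisenberg_neg_mul, one_mul]
  have htrace := congrArg (LinearMap.trace ℂ _) hc
  simp only [twistedAverage, one_mulVec, map_sum, hterm, Finset.sum_const, map_smul,
    LinearMap.trace_one, finrank_fintype_fun_eq_card, smul_eq_mul, nsmul_eq_mul,
    Finset.card_univ, Fintype.card_congr (Equiv.sumArrowEquivProdArrow l l R),
    Fintype.card_prod, Nat.cast_mul] at htrace
  rw [hc, mul_right_cancel₀ hN (htrace.symm.trans (mul_right_comm _ _ _))]

theorem exists_twistedAverage_ne_zero (hψ : ψ.IsPrimitive) (hodd : Odd (Fintype.card (l → R)))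
    {g : Matrix (l ⊕ l) (l ⊕ l) R} (hg : Function.Injective (g *ᵥ ·)) :
    ∃ A, twistedAverage ψ g A ≠ 0 := by
  classical
  by_contra! hzero
  let c (v : l ⊕ l → R) : ℂ := heisenberg ψ (-v) (Pi.single 0 1) 0
  have hsum : ∑ v, c v • heisenberg ψ (g *ᵥ v) = 0 := by
    refine LinearMap.ext fun f => ?_
    have := DFunLike.congr_fun (hzero ((LinearMap.proj 0).smulRight f)) (Pi.single 0 1)
    simpa [twistedAverage] using this
  have htrace := congrArg (LinearMap.trace ℂ _) hsum
  rw [map_sum, Finset.sum_eq_single 0] at htrace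
  · simp [c, heisenberg_zero] at htrace
  · intro v _ hv
    rw [map_smul, trace_heisenberg_of_ne_zero hψ hodd, smul_zero]
    simpa using hg.ne hv
  · simp

theorem Intertwines.isUnit {g : Matrix (l ⊕ l) (l ⊕ l) R} {T : Module.End ℂ ((l → R) → ℂ)}
    (hT : Intertwines ψ g T) (hT0 : T ≠ 0) (hψ : ψ.IsPrimitive)
    (hodd : Odd (Fintype.card (l → R))) : IsUnit T := by
  rw [LinearMap.isUnit_iff_ker_eq_bot, LinearMap.ker_eq_bot']
  intro f hf
  by_contra hne
  obtain ⟨x, hx⟩ := Function.ne_iff.1 hne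
  let A : Module.End ℂ ((l → R) → ℂ) := (LinearMap.proj x).smulRight f
  have hTA : T * A = 0 := by ext y; simp [A, hf]
  have havg : T * twistedAverage ψ 1 A = 0 := by
    rw [twistedAverage, Finset.mul_sum]
    refine Finset.sum_eq_zero fun v _ => ?_
    rw [one_mulVec, ← mul_assoc, ← mul_assoc, hT, mul_assoc _ T, hTA, mul_zero, zero_mul]
  have hA : LinearMap.trace ℂ _ A = f x := by simp [A]
  have hc : (Fintype.card (l → R) : ℂ) * f x ≠ 0 :=
    mul_ne_zero (Nat.cast_ne_zero.2 Fintype.card_ne_zero) hx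
  rw [twistedAverage_one hψ hodd, mul_smul_comm, mul_one, hA] at havg
  exact (smul_ne_zero hc hT0) havg

theorem exists_intertwines_isUnit (hψ : ψ.IsPrimitive) (hodd : Odd (Fintype.card (l → R)))
    {g : Matrix (l ⊕ l) (l ⊕ l) R} (hg : g ∈ symplecticGroup l R) :
    ∃ T, Intertwines ψ g T ∧ IsUnit T := by
  obtain ⟨A, hA⟩ := exists_twistedAverage_ne_zero (ψ := ψ) hψ hodd
    (mulVec_injective_of_mem_symplecticGroup hg)
  have hT := intertwines_twistedAverage (ψ := ψ) hg A
  exact ⟨_, hT, hT.isUnit hA hψ hodd⟩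

/-- `T * parity * T⁻¹` is a multiple of `parity`; compare the traces, both equal to `1`. -/
theorem Intertwines.commute_parity {g : Matrix (l ⊕ l) (l ⊕ l) R}
    {T : Module.End ℂ ((l → R) → ℂ)} (hT : Intertwines ψ g T) (hTunit : IsUnit T)
    (hψ : ψ.IsPrimitive) (hodd : Odd (Fintype.card (l → R))) : Commute T (parity (l → R)) := by
  have hleft : Intertwines ψ (-g) (T * parity (l → R)) := by
    simpa using hT.mul intertwines_parity
  have hright : Intertwines ψ (-g) (parity (l → R) * T) := by
    simpa using intertwines_parity.mul hT
  have hparity : IsUnit (parity (l → R)) := .of_mul_eq_one _ parity_mul_parity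
  obtain ⟨c, hc⟩ := hright.exists_eq_smul hleft (hparity.mul hTunit) hψ hodd
  obtain ⟨T, rfl⟩ := hTunit
  have hconj : T.1 * parity (l → R) * T⁻¹.1 = c • parity (l → R) := by
    rw [hc, smul_mul_assoc, Units.mul_inv_cancel_right]
  have hc1 := congrArg (LinearMap.trace ℂ _) hconj
  rw [LinearMap.trace_conj, map_smul, trace_parity hodd, smul_eq_mul, mul_one] at hc1
  rw [Commute, SemiconjBy, hc, ← hc1, one_smul]

theorem det_restrict_smul_sq (hodd : Odd (Fintype.card (l → R)))
    {T : Module.End ℂ ((l → R) → ℂ)} {c : ℂ}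
    (hT : ∀ f ∈ evenFunctions (l → R), T f ∈ evenFunctions (l → R))
    (hcT : ∀ f ∈ evenFunctions (l → R), (c • T) f ∈ evenFunctions (l → R)) :
    LinearMap.det ((c • T).restrict hcT) ^ 2 =
      c ^ (Fintype.card (l → R) + 1) * LinearMap.det (T.restrict hT) ^ 2 := by
  have hrestrict : (c • T).restrict hcT = c • T.restrict hT := rfl
  rw [hrestrict, LinearMap.det_smul, mul_pow, ← pow_mul, mul_comm _ 2,
    two_mul_finrank_evenFunctions hodd]

namespace IsWeilOperator

variable {g h : Matrix (l ⊕ l) (l ⊕ l) R} {S T : Module.End ℂ ((l → R) → ℂ)}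

theorem neg_one_parity (hcard : Fintype.card (l → R) % 4 = 1) :
    IsWeilOperator ψ (-1 : Matrix (l ⊕ l) (l ⊕ l) R) (parity (l → R)) where
  intertwines := intertwines_parity
  isUnit := .of_mul_eq_one _ parity_mul_parity
  mapsTo _ := parity_mem_evenFunctions
  det_restrict_sq := by rw [restrict_parity, map_one, one_pow, det_parity hcard]

theorem eq (hS : IsWeilOperator ψ g S) (hT : IsWeilOperator ψ g T) (hψ : ψ.IsPrimitive)
    (hodd : Odd (Fintype.card (l → R))) : S = T := by
  obtain ⟨c, rfl⟩ := hS.intertwines.exists_eq_smul hT.intertwines hS.isUnit hψ hodd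
  have hdetT : LinearMap.det (c • S) ≠ 0 := (hT.isUnit.map LinearMap.det).ne_zero
  have hdet := hT.det_restrict_sq
  rw [LinearMap.det_smul, finrank_fintype_fun_eq_card] at hdet hdetT
  rw [det_restrict_smul_sq hodd hS.mapsTo, hS.det_restrict_sq, pow_succ, mul_right_comm] at hdet
  rw [(mul_eq_left₀ hdetT).1 hdet, one_smul]

end IsWeilOperator

theorem exists_isWeilOperator (hψ : ψ.IsPrimitive) (hodd : Odd (Fintype.card (l → R)))
    {g : Matrix (l ⊕ l) (l ⊕ l) R} (hg : g ∈ symplecticGroup l R) :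
    ∃ T, IsWeilOperator ψ g T := by
  obtain ⟨T, hT, hTunit⟩ := exists_intertwines_isUnit hψ hodd hg
  have hmaps : ∀ f ∈ evenFunctions (l → R), T f ∈ evenFunctions (l → R) := fun f hf => by
    have := DFunLike.congr_fun (hT.commute_parity hTunit hψ hodd) f
    rw [Module.End.mul_apply, Module.End.mul_apply, parity_eq_of_mem_evenFunctions hf] at this
    exact this.symm
  have hdet : LinearMap.det T ≠ 0 := (hTunit.map LinearMap.det).ne_zero
  have hdetEven : LinearMap.det (T.restrict hmaps) ≠ 0 := by
    rw [LinearMap.det_eq_det_mul_det _ T hmaps] at hdet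
    exact left_ne_zero_of_mul hdet
  let c : ℂ := LinearMap.det T / LinearMap.det (T.restrict hmaps) ^ 2
  have hc : c ≠ 0 := div_ne_zero hdet (pow_ne_zero 2 hdetEven)
  refine ⟨c • T, hT.smul c, hTunit.smul (Units.mk0 c hc), fun f hf =>
    (evenFunctions _).smul_mem c (hmaps f hf), ?_⟩
  rw [det_restrict_smul_sq hodd hmaps, LinearMap.det_smul, finrank_fintype_fun_eq_card, pow_succ,
    mul_assoc, div_mul_cancel₀ _ (pow_ne_zero 2 hdetEven)]

/-- The Weil representation of the symplectic group on complex functions on `l → R`,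
sending `g` to its unique normalized Weil operator. -/
noncomputable def weilRepresentation (hψ : ψ.IsPrimitive)
    (hodd : Odd (Fintype.card (l → R))) :
    Representation ℂ (symplecticGroup l R) ((l → R) → ℂ) where
  toFun g := (exists_isWeilOperator hψ hodd g.2).choose
  map_one' :=
    (exists_isWeilOperator hψ hodd (1 : symplecticGroup l R).2).choose_spec.eq .one hψ hodd
  map_mul' g h := (exists_isWeilOperator hψ hodd (g * h).2).choose_spec.eq
    ((exists_isWeilOperator hψ hodd g.2).choose_spec.mul
      (exists_isWeilOperator hψ hodd h.2).choose_spec) hψ hodd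

theorem isWeilOperator_weilRepresentation (hψ : ψ.IsPrimitive)
    (hodd : Odd (Fintype.card (l → R))) (g : symplecticGroup l R) :
    IsWeilOperator ψ g.1 (weilRepresentation hψ hodd g) :=
  (exists_isWeilOperator hψ hodd g.2).choose_spec

/-- The subrepresentation of the Weil representation on the even functions. -/
noncomputable def evenWeilRepresentation (hψ : ψ.IsPrimitive)
    (hodd : Odd (Fintype.card (l → R))) :
    Representation ℂ (symplecticGroup l R) (evenFunctions (l → R)) :=
  Subrepresentation.toRepresentation (ρ := weilRepresentation hψ hodd)
    ⟨evenFunctions (l → R), fun g => (isWeilOperator_weilRepresentation hψ hodd g).mapsTo⟩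

theorem evenWeilRepresentation_eq_one_iff (hψ : ψ.IsPrimitive)
    (hodd : Odd (Fintype.card (l → R))) {g : symplecticGroup l R} :
    evenWeilRepresentation hψ hodd g = 1 ↔
      ∀ f ∈ evenFunctions (l → R), weilRepresentation hψ hodd g f = f := by
  simp only [LinearMap.ext_iff, Subtype.forall, Subtype.ext_iff]
  rfl

theorem evenWeilRepresentation_eq_one (hψ : ψ.IsPrimitive) (hcard : Fintype.card (l → R) % 4 = 1)
    (hodd : Odd (Fintype.card (l → R))) {g : symplecticGroup l R} (hg : g.1 = 1 ∨ g.1 = -1) :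
    evenWeilRepresentation hψ hodd g = 1 := by
  have hW := isWeilOperator_weilRepresentation hψ hodd g
  rw [evenWeilRepresentation_eq_one_iff]
  intro f hf
  rcases hg with hg | hg <;> rw [hg] at hW
  · rw [hW.eq .one hψ hodd, Module.End.one_apply]
  · rw [hW.eq (.neg_one_parity hcard) hψ hodd, parity_eq_of_mem_evenFunctions hf]

omit [DecidableEq l] [Fintype R] in
/-- The even function `heisenberg ψ v δ₀ + heisenberg ψ (-v) δ₀` is supported on `± v ∘ Sum.inl`. -/
theorem Intertwines.mulVec_comp_inl_eq_or_eq_neg {g : Matrix (l ⊕ l) (l ⊕ l) R}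
    {T : Module.End ℂ ((l → R) → ℂ)} (hT : Intertwines ψ g T)
    (hfix : ∀ f ∈ evenFunctions (l → R), T f = f) (v : l ⊕ l → R) :
    (g *ᵥ v) ∘ Sum.inl = v ∘ Sum.inl ∨ (g *ᵥ v) ∘ Sum.inl = -(v ∘ Sum.inl) := by
  classical
  let E (v : l ⊕ l → R) : (l → R) → ℂ :=
    heisenberg ψ v (Pi.single 0 1) + heisenberg ψ (-v) (Pi.single 0 1)
  have hE (v) : E v = ψ ((v ∘ Sum.inl) ⬝ᵥ (v ∘ Sum.inr)) •
      (Pi.single (v ∘ Sum.inl) 1 + Pi.single (-(v ∘ Sum.inl)) 1) := by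
    simp [E, heisenberg_single_zero, Pi.neg_comp]
  have hδ : (Pi.single 0 1 : (l → R) → ℂ) ∈ evenFunctions (l → R) :=
    mem_evenFunctions.2 fun x => by simp [Pi.single_apply]
  have hEeven (v) : E v ∈ evenFunctions (l → R) := mem_evenFunctions.2 fun x => by
    simp [hE, Pi.single_apply, neg_eq_iff_eq_neg, add_comm]
  have hTE : E (g *ᵥ v) = E v := by
    have hcomm (w) : T (heisenberg ψ w (Pi.single 0 1)) =
        heisenberg ψ (g *ᵥ w) (Pi.single 0 1) := by
      rw [← Module.End.mul_apply, hT, Module.End.mul_apply, hfix _ hδ]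
    rw [← hfix _ (hEeven v), map_add, hcomm, hcomm, mulVec_neg]
  by_contra! hne
  have hval := congrFun hTE ((g *ᵥ v) ∘ Sum.inl)
  simp only [hE, Pi.smul_apply, Pi.add_apply, Pi.single_apply, if_true, if_neg hne.1, if_neg hne.2,
    add_zero, smul_eq_mul, mul_zero, mul_eq_zero, (ψ.val_isUnit _).ne_zero, false_or] at hval
  split_ifs at hval <;> norm_num at hval

theorem Intertwines.mulVec_elim_zero_comp_inr {g : Matrix (l ⊕ l) (l ⊕ l) R}
    {T : Module.End ℂ ((l → R) → ℂ)} (hT : Intertwines ψ g T)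
    (hfix : T 1 = 1) (hψ : ψ.IsPrimitive) (hodd : Odd (Fintype.card (l → R)))
    (a : l → R) : (g *ᵥ Sum.elim a 0) ∘ Sum.inr = 0 := by
  set w := g *ᵥ Sum.elim a 0
  have hone : heisenberg ψ w 1 = 1 := by
    have htranslate : heisenberg ψ (Sum.elim a 0) (1 : (l → R) → ℂ) = 1 := by
      ext x
      simp [heisenberg_apply]
    have := DFunLike.congr_fun (hT (Sum.elim a 0)) 1
    rwa [Module.End.mul_apply, Module.End.mul_apply, htranslate, hfix, eq_comm] at this
  have hphase (x : l → R) :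
      ψ ((w ∘ Sum.inr) ⬝ᵥ (x + x) - (w ∘ Sum.inl) ⬝ᵥ (w ∘ Sum.inr)) = 1 := by
    simpa [heisenberg_apply] using congrFun hone x
  by_contra hne
  obtain ⟨x, hx⟩ := exists_apply_dotProduct_add_self_ne_one hψ hodd hne
  rw [dotProduct_add, dotProduct_comm x, ← dotProduct_add] at hx
  have hphase_zero := hphase 0
  rw [add_zero, dotProduct_zero, zero_sub] at hphase_zero
  have hphase_x := hphase x
  rw [sub_eq_add_neg, AddChar.map_add_eq_mul, hphase_zero, mul_one] at hphase_x
  exact hx hphase_x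

theorem Intertwines.eq_one_or_eq_neg_one {g : Matrix (l ⊕ l) (l ⊕ l) R}
    {T : Module.End ℂ ((l → R) → ℂ)} (hT : Intertwines ψ g T) (hg : g ∈ symplecticGroup l R)
    (hfix : ∀ f ∈ evenFunctions (l → R), T f = f) (hψ : ψ.IsPrimitive)
    (hodd : Odd (Fintype.card (l → R))) : g = 1 ∨ g = -1 := by
  have hinr := hT.mulVec_elim_zero_comp_inr (hfix 1 (mem_evenFunctions.2 fun _ => rfl)) hψ hodd
  let proj := (LinearMap.funLeft R R (Sum.inl : l → l ⊕ l)).toAddMonoidHom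
  rcases eq_or_eq_neg_of_forall_eq_or_eq_neg (φ := proj.comp g.mulVecLin.toAddMonoidHom)
    (χ := proj) (hT.mulVec_comp_inl_eq_or_eq_neg hfix) with h | h
  · exact .inl (eq_one_of_mem_symplecticGroup hg (DFunLike.congr_fun h) hinr)
  · right
    rw [← neg_eq_iff_eq_neg]
    refine eq_one_of_mem_symplecticGroup (SymplecticGroup.neg_mem hg) (fun v => ?_) fun a => ?_
    · rw [neg_mulVec, Pi.neg_comp, neg_eq_iff_eq_neg]
      exact DFunLike.congr_fun h v
    · rw [neg_mulVec, Pi.neg_comp, hinr, neg_zero]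

theorem ker_evenWeilRepresentation {F : Type*} [Field F] [Fintype F] {ψ : AddChar F ℂ}
    (hψ : ψ.IsPrimitive) (hcard : Fintype.card (l → F) % 4 = 1)
    (hodd : Odd (Fintype.card (l → F))) :
    (evenWeilRepresentation hψ hodd).toHomUnits.ker =
      Subgroup.center (symplecticGroup l F) := by
  ext g
  rw [MonoidHom.mem_ker, ← Units.val_inj, MonoidHom.coe_toHomUnits, Units.val_one]
  constructor
  · intro hg
    exact mem_center_of_eq_one_or_eq_neg_one
      ((isWeilOperator_weilRepresentation hψ hodd g).intertwines.eq_one_or_eq_neg_one g.2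
        ((evenWeilRepresentation_eq_one_iff hψ hodd).1 hg) hψ hodd)
  · intro hg
    exact evenWeilRepresentation_eq_one hψ hcard hodd
      (eq_one_or_eq_neg_one_of_forall_mulVec (mulVec_eq_or_eq_neg_of_mem_center hg))

end Heisenberg

end WeilRepresentation

open WeilRepresentation in
theorem psp4_f3_faithful_rep_dim5_general {l F : Type*} [Fintype l] [DecidableEq l] [Field F]
    [Fintype F] (hcard : Fintype.card F ^ Fintype.card l % 4 = 1) :
    ∃ ρ : Representation ℂ (symplecticGroup l F ⧸ Subgroup.center (symplecticGroup l F))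
        (Fin ((Fintype.card F ^ Fintype.card l + 1) / 2) → ℂ),
      Function.Injective ρ := by
  classical
  rw [← Fintype.card_fun] at hcard ⊢
  have hodd : Odd (Fintype.card (l → F)) := Nat.odd_iff.2 (by lia)
  have hψ := AddChar.FiniteField.primitiveChar_to_Complex_isPrimitive F
  have hker := ker_evenWeilRepresentation (l := l) hψ hcard hodd
  let ρ := QuotientGroup.lift _ (evenWeilRepresentation (l := l) hψ hodd).toHomUnits hker.ge
  have hρ : Function.Injective ρ := (QuotientGroup.injective_lift_iff _ _ hker.ge).2 hker.symm
  have hrank := two_mul_finrank_evenFunctions hodd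
  let e : evenFunctions (l → F) ≃ₗ[ℂ] (Fin ((Fintype.card (l → F) + 1) / 2) → ℂ) :=
    LinearEquiv.ofFinrankEq _ _ (by rw [finrank_fin_fun]; lia)
  exact ⟨(e.conjRingEquiv.toMonoidHom.comp (Units.coeHom _)).comp ρ,
    (e.conjRingEquiv.injective.comp Units.val_injective).comp hρ⟩

/-- PSp(4, F_3) admits a faithful complex linear representation of dimension 5. -/
theorem psp4_f3_faithful_rep_dim5 :
    ∃ ρ : Representation ℂ (Matrix.symplecticGroup (Fin 2) (ZMod 3) ⧸
        Subgroup.center (Matrix.symplecticGroup (Fin 2) (ZMod 3))) (Fin 5 → ℂ),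
      Function.Injective ρ :=
  psp4_f3_faithful_rep_dim5_general (l := Fin 2) (F := ZMod 3) (by simp)
end
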